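/- arXiv:2512.21143 — 2 statements merged into one kernel-verified Lean document; each statement's English description precedes it below -/
import Mathlib

section
/- Let q be an odd square prime power. Then PSL(2,q) partitions the set of Baer sublines of PG(1,q) into exactly two orbits 𝓑₁, 𝓑₂ of equal size, and for i=1,2 the incidence structure D_i = (PG(1,q), 𝓑_i) is a 2-(q+1, √q+1, (√q+1)/2) design; D₁ and D₂ are isomorphic via any element of PΓL(2,q) ∖ PΣL(2,q); and every group G with PSL(2,q) ⊴ G ≤ PΣL(2,q) acts flag-transitively on D_i. In particular, for q=25 each D_i is a 2-(26,6,3) design admitting PSL(2,25) ⊴ G ≤ PΣL(2,25) as a flag-transitive automorphism group. -/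
/-!
Write `B₀ = PG(1,K)` for the canonical subline. The whole statement rests on one fact: if
`g ∈ GL(2,F)` stabilizes `B₀` then `det g` is a square in `F`. Indeed the columns of `g` and their
sum are multiples of `K`-rational vectors, so Cramer's rule gives `det g ∈ K · F²`
(`det_of_stab`), and every element of `K` is a square in `F` because `√q - 1` divides
`(q - 1) / 2` (`isSquare_of_mem`). Hence the square class of `det g` is an invariant of the Baer
subline `g B₀` (`image_mem_Orb`).

Since a matrix of square determinant is a scalar multiple of one of determinant one, the
`PSL(2,q)`-orbits are exactly the two classes of this invariant (`orbit_eq`). A semilinear map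
`(σ, g)` preserves `K` and squares, so it multiplies the invariant by the class of `det g`
(`projSemilinear_mem_Orb`); elements of `PΓL ∖ PΣL` are those with `det g` a nonsquare, and
exchange the classes. Flag-transitivity holds since the stabilizer of `B₀` is transitive on `B₀`
and consists of matrices of square determinant (`flagTransitive_Orb`).

For the design property, the Baer sublines through `[1 : 0]` and `[0 : 1]` are the
`diag(a, 1) B₀`, and they are parametrized by `Fˣ / Kˣ`, of order `√q + 1` (`card_base`). A
diagonal matrix of nonsquare determinant fixes both points and exchanges the two classes, so
each class contributes half of them (`isDesign_Orb`).
-/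

open scoped Pointwise
open Matrix Projectivization

noncomputable section

namespace FT

variable (F : Type) [Field F]

/-- The projective line `PG(1,q)` over a field `F`. -/
abbrev PG1 := Projectivization F (Fin 2 → F)

/-- The semilinear bijection of `F²` attached to a field automorphism `σ` and a
matrix `g ∈ GL(2,F)`, namely `v ↦ g ⬝ (σ ∘ v)`. -/
def semilinearAux (σ : F ≃+* F) (g : GL (Fin 2) F) :
    (Fin 2 → F) →ₛₗ[(σ : F →+* F)] (Fin 2 → F) where
  toFun v := (g : Matrix (Fin 2) (Fin 2) F).mulVec (fun i => σ (v i))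
  map_add' v w := show (g : Matrix (Fin 2) (Fin 2) F).mulVec (fun i => σ ((v + w) i)) =
      (g : Matrix (Fin 2) (Fin 2) F).mulVec (fun i => σ (v i)) +
        (g : Matrix (Fin 2) (Fin 2) F).mulVec (fun i => σ (w i)) by
    have h1 : (fun i => σ ((v + w) i)) = (fun i => σ (v i)) + (fun i => σ (w i)) := by
      funext i; simp
    rw [h1, Matrix.mulVec_add]
  map_smul' c v := show (g : Matrix (Fin 2) (Fin 2) F).mulVec (fun i => σ ((c • v) i)) =
      σ c • (g : Matrix (Fin 2) (Fin 2) F).mulVec (fun i => σ (v i)) by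
    have h1 : (fun i => σ ((c • v) i)) = σ c • (fun i => σ (v i)) := by
      funext i; simp [mul_comm]
    rw [h1, Matrix.mulVec_smul]

lemma semilinearAux_apply (σ : F ≃+* F) (g : GL (Fin 2) F) (v : Fin 2 → F) :
    semilinearAux F σ g v = (g : Matrix (Fin 2) (Fin 2) F).mulVec (fun i => σ (v i)) := rfl

lemma coe_unitsMap (σ : F →+* F) (g : GL (Fin 2) F) :
    ((Units.map σ.mapMatrix.toMonoidHom g : GL (Fin 2) F) : Matrix (Fin 2) (Fin 2) F) =
      (g : Matrix (Fin 2) (Fin 2) F).map σ := rfl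

lemma semilinearAux_injective (σ : F ≃+* F) (g : GL (Fin 2) F) :
    Function.Injective (semilinearAux F σ g) := by
  intro v w h
  letI := g.invertible
  have hinj : Function.Injective ((g : Matrix (Fin 2) (Fin 2) F).mulVec) :=
    Matrix.mulVec_injective_of_invertible _
  have h' : (g : Matrix (Fin 2) (Fin 2) F).mulVec (fun i => σ (v i)) =
      (g : Matrix (Fin 2) (Fin 2) F).mulVec (fun i => σ (w i)) := h
  have h2 := hinj h'
  funext i
  exact σ.injective (congrFun h2 i)

lemma semilinearAux_cancel (σ : F ≃+* F) (g : GL (Fin 2) F) (v : Fin 2 → F) :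
    semilinearAux F σ.symm (Units.map (σ.symm : F →+* F).mapMatrix.toMonoidHom g⁻¹)
      (semilinearAux F σ g v) = v := by
  simp only [semilinearAux_apply, coe_unitsMap]
  have h1 : (fun i => σ.symm (((g : Matrix (Fin 2) (Fin 2) F).mulVec
      (fun i => σ (v i))) i)) = ((g : Matrix (Fin 2) (Fin 2) F).map (σ.symm : F →+* F)).mulVec
        (fun i => σ.symm (σ (v i))) := by
    funext i
    exact RingHom.map_mulVec (σ.symm : F →+* F) _ _ i
  rw [h1]
  simp only [RingEquiv.symm_apply_apply]
  rw [Matrix.mulVec_mulVec, ← Matrix.map_mul]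
  have hgg : ((g⁻¹ : GL (Fin 2) F) : Matrix (Fin 2) (Fin 2) F) *
      ((g : GL (Fin 2) F) : Matrix (Fin 2) (Fin 2) F) = 1 := by
    rw [← Units.val_mul, inv_mul_cancel g, Units.val_one]
  rw [hgg, Matrix.map_one _ (map_zero _) (map_one _), Matrix.one_mulVec]

lemma semilinearAux_cancel' (σ : F ≃+* F) (g : GL (Fin 2) F) (v : Fin 2 → F) :
    semilinearAux F σ g
      (semilinearAux F σ.symm (Units.map (σ.symm : F →+* F).mapMatrix.toMonoidHom g⁻¹) v) = v := by
  simp only [semilinearAux_apply, coe_unitsMap]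
  have h1 : (fun i => σ ((((g⁻¹ : GL (Fin 2) F) : Matrix (Fin 2) (Fin 2) F).map
      (σ.symm : F →+* F)).mulVec (fun i => σ.symm (v i)) i)) =
      ((((g⁻¹ : GL (Fin 2) F) : Matrix (Fin 2) (Fin 2) F).map (σ.symm : F →+* F)).map
        (σ : F →+* F)).mulVec (fun i => σ (σ.symm (v i))) := by
    funext i
    exact RingHom.map_mulVec (σ : F →+* F) _ _ i
  rw [h1]
  simp only [RingEquiv.apply_symm_apply]
  rw [Matrix.map_map]
  have h2 : ((σ : F →+* F) : F → F) ∘ ((σ.symm : F →+* F) : F → F) = id := by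
    funext x; simp
  rw [h2, Matrix.map_id, Matrix.mulVec_mulVec]
  have hgg : ((g : GL (Fin 2) F) : Matrix (Fin 2) (Fin 2) F) *
      ((g⁻¹ : GL (Fin 2) F) : Matrix (Fin 2) (Fin 2) F) = 1 := by
    rw [← Units.val_mul, mul_inv_cancel g, Units.val_one]
  rw [hgg, Matrix.one_mulVec]

/-- The permutation of the projective line `PG(1,F)` induced by the projective semilinear
transformation with companion field automorphism `σ` and matrix `g ∈ GL(2,F)`. -/
def projSemilinear (σ : F ≃+* F) (g : GL (Fin 2) F) : Equiv.Perm (PG1 F) where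
  toFun := Projectivization.map (semilinearAux F σ g) (semilinearAux_injective F σ g)
  invFun := Projectivization.map
    (semilinearAux F σ.symm (Units.map (σ.symm : F →+* F).mapMatrix.toMonoidHom g⁻¹))
    (semilinearAux_injective F _ _)
  left_inv := by
    intro p
    induction p using Projectivization.ind with
    | h v hv =>
      rw [Projectivization.map_mk, Projectivization.map_mk, Projectivization.mk_eq_mk_iff]
      exact ⟨1, by rw [one_smul]; exact (semilinearAux_cancel F σ g v).symm⟩
  right_inv := by
    intro p
    induction p using Projectivization.ind with
    | h v hv =>
      rw [Projectivization.map_mk, Projectivization.map_mk, Projectivization.mk_eq_mk_iff]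
      exact ⟨1, by rw [one_smul]; exact (semilinearAux_cancel' F σ g v).symm⟩

/-- `PGL(2,F)` as a group of permutations of the projective line. -/
def PGLsub : Subgroup (Equiv.Perm (PG1 F)) :=
  Subgroup.closure {e | ∃ g : GL (Fin 2) F, e = projSemilinear F (RingEquiv.refl F) g}

/-- `PSL(2,F)` as a group of permutations of the projective line. -/
def PSLsub : Subgroup (Equiv.Perm (PG1 F)) :=
  Subgroup.closure {e | ∃ s : Matrix.SpecialLinearGroup (Fin 2) F,
    e = projSemilinear F (RingEquiv.refl F) (Matrix.SpecialLinearGroup.toGL s)}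

/-- `PΣL(2,F)` as a group of permutations of the projective line. -/
def PSigmaLsub : Subgroup (Equiv.Perm (PG1 F)) :=
  Subgroup.closure {e | ∃ (σ : F ≃+* F) (s : Matrix.SpecialLinearGroup (Fin 2) F),
    e = projSemilinear F σ (Matrix.SpecialLinearGroup.toGL s)}

/-- `PΓL(2,F)` as a group of permutations of the projective line. -/
def PGammaLsub : Subgroup (Equiv.Perm (PG1 F)) :=
  Subgroup.closure {e | ∃ (σ : F ≃+* F) (g : GL (Fin 2) F), e = projSemilinear F σ g}

/-- The canonical subline of `PG(1,F)` determined by a subfield `K` of `F`: the set of points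
admitting homogeneous coordinates in `K`. -/
def canonicalSubline (K : Subfield F) : Set (PG1 F) :=
  {p | ∃ (v : Fin 2 → F) (hv : v ≠ 0), (∀ i, v i ∈ K) ∧ p = Projectivization.mk F v hv}

/-- A subset of `PG(1,F)` is a (`K`-)Baer subline if it is the image of the canonical subline
over `K` under an element of `PGL(2,F)`. -/
def IsBaerSubline (K : Subfield F) (s : Set (PG1 F)) : Prop :=
  ∃ g : GL (Fin 2) F, s = (projSemilinear F (RingEquiv.refl F) g) '' canonicalSubline F K

end FT
end

namespace FT

/-- `IsDesign 𝓑 k lam` says that the family `𝓑` of subsets of the point set `Pt` is the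
block set of a `2-(v, k, lam)` design. -/
structure IsDesign {Pt : Type*} (𝓑 : Set (Set Pt)) (k lam : ℕ) : Prop where
  block_card : ∀ B ∈ 𝓑, Nat.card B = k
  pair_count : ∀ x y : Pt, x ≠ y → Nat.card {B : Set Pt | B ∈ 𝓑 ∧ x ∈ B ∧ y ∈ B} = lam

/-- The group `G` is transitive on the flags (incident point-block pairs) of the design. -/
def FlagTransitive {Pt : Type*} (G : Type*) [Group G] [MulAction G Pt]
    (𝓑 : Set (Set Pt)) : Prop :=
  ∀ B ∈ 𝓑, ∀ C ∈ 𝓑, ∀ x ∈ B, ∀ y ∈ C, ∃ g : G, g • B = C ∧ g • x = y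

end FT

open FT

namespace FT

section Aux

variable {F : Type} [Field F]

/-! ### The action of `GL(2,F)` and of semilinear maps -/

lemma projSemilinear_mk (σ : F ≃+* F) (g : GL (Fin 2) F) (v : Fin 2 → F) (hv : v ≠ 0)
    (hw : (g : Matrix (Fin 2) (Fin 2) F).mulVec (fun i => σ (v i)) ≠ 0) :
    projSemilinear F σ g (mk F v hv) =
      mk F ((g : Matrix (Fin 2) (Fin 2) F).mulVec (fun i => σ (v i))) hw := rfl

lemma semilinear_ne_zero (σ : F ≃+* F) (g : GL (Fin 2) F) {v : Fin 2 → F} (hv : v ≠ 0) :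
    (g : Matrix (Fin 2) (Fin 2) F).mulVec (fun i => σ (v i)) ≠ 0 := by
  intro h
  exact hv (semilinearAux_injective F σ g
    (h.trans (map_zero (semilinearAux F σ g)).symm))

lemma projSemilinear_mul (σ τ : F ≃+* F) (g h : GL (Fin 2) F) :
    projSemilinear F σ g * projSemilinear F τ h =
      projSemilinear F (τ.trans σ)
        (g * Units.map (σ : F →+* F).mapMatrix.toMonoidHom h) := by
  ext p
  induction p using Projectivization.ind with
  | h v hv =>
    rw [Equiv.Perm.mul_apply, projSemilinear_mk τ h v hv (semilinear_ne_zero τ h hv),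
      projSemilinear_mk σ g _ _ (semilinear_ne_zero σ g (semilinear_ne_zero τ h hv)),
      projSemilinear_mk _ _ v hv (semilinear_ne_zero _ _ hv)]
    congr 1
    rw [Units.val_mul, ← Matrix.mulVec_mulVec]
    congr 1
    funext i
    exact RingHom.map_mulVec (σ : F →+* F) _ _ i

/-- The action of `GL(2,F)` on the projective line, as a homomorphism to permutations. -/
def lin : GL (Fin 2) F →* Equiv.Perm (PG1 F) where
  toFun g := projSemilinear F (RingEquiv.refl F) g
  map_one' := by
    ext p
    induction p using Projectivization.ind with
    | h v hv =>
      rw [projSemilinear_mk _ _ v hv (semilinear_ne_zero _ _ hv)]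
      simp
  map_mul' g h := by
    rw [projSemilinear_mul]
    congr 1

lemma lin_def (g : GL (Fin 2) F) : projSemilinear F (RingEquiv.refl F) g = lin g := rfl

lemma mulVec_ne_zero (g : GL (Fin 2) F) {v : Fin 2 → F} (hv : v ≠ 0) :
    (g : Matrix (Fin 2) (Fin 2) F).mulVec v ≠ 0 :=
  semilinear_ne_zero (RingEquiv.refl F) g hv

lemma lin_mk (g : GL (Fin 2) F) (v : Fin 2 → F) (hv : v ≠ 0) :
    lin g (mk F v hv) =
      mk F ((g : Matrix (Fin 2) (Fin 2) F).mulVec v) (mulVec_ne_zero g hv) := rfl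

lemma lin_mul_image (g h : GL (Fin 2) F) (s : Set (PG1 F)) :
    lin (g * h) '' s = lin g '' (lin h '' s) := by
  rw [map_mul, Equiv.Perm.coe_mul, Set.image_comp]

lemma lin_inv_image {g : GL (Fin 2) F} {s t : Set (PG1 F)} (h : lin g '' s = t) :
    lin g⁻¹ '' t = s := by
  rw [← h, ← lin_mul_image, inv_mul_cancel, map_one, Equiv.Perm.coe_one, Set.image_id]

lemma image_injective (e : Equiv.Perm (PG1 F)) :
    Function.Injective (fun s : Set (PG1 F) => e '' s) :=
  Set.image_injective.2 e.injective

/-- Matrices differing by a scalar induce the same permutation, also after composing with a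
field automorphism. -/
lemma projSemilinear_eq_of_smul (σ : F ≃+* F) {g h : GL (Fin 2) F} (c : F)
    (H : (g : Matrix (Fin 2) (Fin 2) F) = c • (h : Matrix (Fin 2) (Fin 2) F)) :
    projSemilinear F σ g = projSemilinear F σ h := by
  ext p
  induction p using Projectivization.ind with
  | h v hv =>
    rw [projSemilinear_mk σ g v hv (semilinear_ne_zero _ _ hv),
      projSemilinear_mk σ h v hv (semilinear_ne_zero _ _ hv), mk_eq_mk_iff']
    exact ⟨c, by rw [H, Matrix.smul_mulVec]⟩

lemma lin_eq_of_smul {g h : GL (Fin 2) F} (c : F)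
    (H : (g : Matrix (Fin 2) (Fin 2) F) = c • (h : Matrix (Fin 2) (Fin 2) F)) :
    lin g = lin h := projSemilinear_eq_of_smul _ c H

lemma det_ne_zero (g : GL (Fin 2) F) : (g : Matrix (Fin 2) (Fin 2) F).det ≠ 0 :=
  ((Matrix.isUnit_iff_isUnit_det _).1 g.isUnit).ne_zero

/-- A matrix of square determinant is a scalar multiple of one of determinant one. -/
lemma exists_special {g : GL (Fin 2) F}
    (hg : IsSquare (g : Matrix (Fin 2) (Fin 2) F).det) :
    ∃ (s : Matrix.SpecialLinearGroup (Fin 2) F) (c : F),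
      (g : Matrix (Fin 2) (Fin 2) F) =
        c • ((Matrix.SpecialLinearGroup.toGL s : GL (Fin 2) F) : Matrix (Fin 2) (Fin 2) F) := by
  obtain ⟨r, hr⟩ := hg
  have hr0 : r ≠ 0 := by
    rintro rfl
    exact det_ne_zero g (by simpa using hr)
  refine ⟨⟨r⁻¹ • (g : Matrix (Fin 2) (Fin 2) F), ?_⟩, r, ?_⟩
  · rw [Matrix.det_smul, hr, Fintype.card_fin]
    field_simp
  · change _ = r • (r⁻¹ • (g : Matrix (Fin 2) (Fin 2) F))
    rw [smul_smul, mul_inv_cancel₀ hr0, one_smul]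

lemma lin_mem_PSL {g : GL (Fin 2) F} (hg : IsSquare (g : Matrix (Fin 2) (Fin 2) F).det) :
    lin g ∈ PSLsub F := by
  obtain ⟨s, c, h⟩ := exists_special hg
  exact Subgroup.subset_closure ⟨s, lin_eq_of_smul c h⟩

lemma mem_PSL {e : Equiv.Perm (PG1 F)} (he : e ∈ PSLsub F) :
    ∃ g : GL (Fin 2) F, (g : Matrix (Fin 2) (Fin 2) F).det = 1 ∧ e = lin g := by
  unfold PSLsub at he
  induction he using Subgroup.closure_induction with
  | mem x hx =>
    obtain ⟨s, rfl⟩ := hx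
    exact ⟨_, s.2, rfl⟩
  | one => exact ⟨1, by simp, by simp⟩
  | mul x y _ _ hx hy =>
    obtain ⟨g, hg, rfl⟩ := hx
    obtain ⟨h, hh, rfl⟩ := hy
    exact ⟨g * h, by simp [hg, hh], by simp⟩
  | inv x _ hx =>
    obtain ⟨g, hg, rfl⟩ := hx
    exact ⟨g⁻¹, by simp [hg, Matrix.det_nonsing_inv], by simp⟩

lemma mem_PSigma {σ : F ≃+* F} {g : GL (Fin 2) F}
    (hg : IsSquare (g : Matrix (Fin 2) (Fin 2) F).det) :
    projSemilinear F σ g ∈ PSigmaLsub F := by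
  obtain ⟨s, c, h⟩ := exists_special hg
  exact Subgroup.subset_closure ⟨σ, s, projSemilinear_eq_of_smul σ c h⟩

lemma mem_PGamma {e : Equiv.Perm (PG1 F)} (he : e ∈ PGammaLsub F) :
    ∃ (σ : F ≃+* F) (g : GL (Fin 2) F), e = projSemilinear F σ g := by
  unfold PGammaLsub at he
  induction he using Subgroup.closure_induction with
  | mem x hx => exact hx
  | one => exact ⟨RingEquiv.refl F, 1, (map_one lin).symm⟩
  | mul x y _ _ hx hy =>
    obtain ⟨σ, g, rfl⟩ := hx
    obtain ⟨τ, h, rfl⟩ := hy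
    exact ⟨_, _, projSemilinear_mul σ τ g h⟩
  | inv x _ hx =>
    obtain ⟨σ, g, rfl⟩ := hx
    refine ⟨σ.symm, Units.map (σ.symm : F →+* F).mapMatrix.toMonoidHom g⁻¹, ?_⟩
    ext p
    rfl

/-! ### The canonical subline and its stabilizer -/

lemma mk_mem_canonical (K : Subfield F) (v : Fin 2 → F) (hv : v ≠ 0) :
    mk F v hv ∈ canonicalSubline F K ↔
      ∃ (c : F) (w : Fin 2 → F), (∀ i, w i ∈ K) ∧ v = c • w := by
  constructor
  · rintro ⟨w, hw, hwK, h⟩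
    rw [mk_eq_mk_iff'] at h
    obtain ⟨a, ha⟩ := h
    exact ⟨a, w, hwK, ha.symm⟩
  · rintro ⟨c, w, hwK, rfl⟩
    have hw : w ≠ 0 := by rintro rfl; simp at hv
    refine ⟨w, hw, hwK, ?_⟩
    rw [mk_eq_mk_iff']
    exact ⟨c, rfl⟩

/-- The point `[1 : 0]`. -/
def e0 (F : Type) [Field F] : PG1 F := mk F ![1, 0] (by simp)

/-- The point `[0 : 1]`. -/
def e1 (F : Type) [Field F] : PG1 F := mk F ![0, 1] (by simp)

/-- An invertible matrix with entries in `K` stabilizes the canonical subline; finiteness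
upgrades the evident inclusion to an equality. -/
lemma lin_canonical [Finite F] (K : Subfield F) (m : GL (Fin 2) F)
    (hm : ∀ i j, (m : Matrix (Fin 2) (Fin 2) F) i j ∈ K) :
    lin m '' canonicalSubline F K = canonicalSubline F K := by
  apply Set.eq_of_subset_of_ncard_le
  · rintro _ ⟨_, ⟨v, hv, hvK, rfl⟩, rfl⟩
    rw [lin_mk]
    refine ⟨_, _, ?_, rfl⟩
    intro i
    simp only [Matrix.mulVec, dotProduct]
    exact K.sum_mem fun j _ => K.mul_mem (hm i j) (hvK j)
  · rw [Set.ncard_image_of_injective _ (lin m).injective]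
  · exact Set.toFinite _

/-- The invertible matrix with columns `u` and `v`. -/
def colGL (u v : Fin 2 → F) (h : u 0 * v 1 - v 0 * u 1 ≠ 0) : GL (Fin 2) F :=
  Matrix.GeneralLinearGroup.mkOfDetNeZero !![u 0, v 0; u 1, v 1]
    (by rw [Matrix.det_fin_two_of]; exact h)

lemma colGL_val (u v : Fin 2 → F) (h : u 0 * v 1 - v 0 * u 1 ≠ 0) :
    (colGL u v h : Matrix (Fin 2) (Fin 2) F) = !![u 0, v 0; u 1, v 1] := rfl

lemma lin_colGL_e0 (u v : Fin 2 → F) (h : u 0 * v 1 - v 0 * u 1 ≠ 0) (hu : u ≠ 0) :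
    lin (colGL u v h) (e0 F) = mk F u hu := by
  rw [e0, lin_mk, mk_eq_mk_iff']
  refine ⟨1, ?_⟩
  rw [colGL_val]
  ext i
  fin_cases i <;> simp

lemma lin_colGL_e1 (u v : Fin 2 → F) (h : u 0 * v 1 - v 0 * u 1 ≠ 0) (hv : v ≠ 0) :
    lin (colGL u v h) (e1 F) = mk F v hv := by
  rw [e1, lin_mk, mk_eq_mk_iff']
  refine ⟨1, ?_⟩
  rw [colGL_val]
  ext i
  fin_cases i <;> simp

lemma colGL_canonical [Finite F] (K : Subfield F) (u v : Fin 2 → F)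
    (h : u 0 * v 1 - v 0 * u 1 ≠ 0) (hu : ∀ i, u i ∈ K) (hv : ∀ i, v i ∈ K) :
    lin (colGL u v h) '' canonicalSubline F K = canonicalSubline F K := by
  apply lin_canonical
  intro i j
  rw [colGL_val]
  fin_cases i <;> fin_cases j <;> simp [hu, hv]

/-- The stabilizer of the canonical subline is transitive on its points. -/
lemma exists_stab_e0 [Finite F] (K : Subfield F) {p : PG1 F} (hp : p ∈ canonicalSubline F K) :
    ∃ m : GL (Fin 2) F, lin m '' canonicalSubline F K = canonicalSubline F K ∧
      lin m (e0 F) = p := by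
  obtain ⟨u, hu, huK, rfl⟩ := hp
  by_cases h0 : u 0 = 0
  · have h1 : u 1 ≠ 0 := by
      intro h1
      apply hu
      ext i
      fin_cases i <;> simp [h0, h1]
    have hd : u 0 * (![1, 0] : Fin 2 → F) 1 - (![1, 0] : Fin 2 → F) 0 * u 1 ≠ 0 := by
      simpa using h1
    refine ⟨colGL u ![1, 0] hd, colGL_canonical K _ _ _ huK ?_, lin_colGL_e0 _ _ _ _⟩
    intro i
    fin_cases i <;> simp [K.one_mem, K.zero_mem]
  · have hd : u 0 * (![0, 1] : Fin 2 → F) 1 - (![0, 1] : Fin 2 → F) 0 * u 1 ≠ 0 := by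
      simpa using h0
    refine ⟨colGL u ![0, 1] hd, colGL_canonical K _ _ _ huK ?_, lin_colGL_e0 _ _ _ _⟩
    intro i
    fin_cases i <;> simp [K.one_mem, K.zero_mem]

/-- Any two distinct points are the images of `[1 : 0]` and `[0 : 1]` under some matrix. -/
lemma exists_lin_pair {x y : PG1 F} (hxy : x ≠ y) :
    ∃ g : GL (Fin 2) F, lin g (e0 F) = x ∧ lin g (e1 F) = y := by
  induction x using Projectivization.ind with
  | h u hu =>
  induction y using Projectivization.ind with
  | h v hv =>
  have hd : u 0 * v 1 - v 0 * u 1 ≠ 0 := by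
    intro hd
    apply hxy
    rw [mk_eq_mk_iff']
    by_cases h0 : v 0 = 0
    · have h1 : v 1 ≠ 0 := by
        intro h1
        apply hv
        ext i
        fin_cases i <;> simp [h0, h1]
      have hu0 : u 0 = 0 := by simpa [h0, h1] using hd
      refine ⟨u 1 / v 1, ?_⟩
      ext i
      fin_cases i <;> simp [h0, hu0, h1]
    · refine ⟨u 0 / v 0, ?_⟩
      ext i
      fin_cases i
      · simp [h0]
      · simp only [Pi.smul_apply, smul_eq_mul, Fin.mk_one]
        field_simp
        linear_combination hd
  exact ⟨colGL u v hd, lin_colGL_e0 _ _ _ _, lin_colGL_e1 _ _ _ _⟩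

/-- Up to squares, the determinant of a stabilizing matrix lies in `K`: its columns and their
sum are multiples of `K`-rational vectors, and Cramer's rule compares the three factors. -/
lemma det_of_stab (K : Subfield F) (hsq : ∀ x ∈ K, IsSquare x) (m : GL (Fin 2) F)
    (hm : lin m '' canonicalSubline F K = canonicalSubline F K) :
    IsSquare (m : Matrix (Fin 2) (Fin 2) F).det := by
  have key : ∀ v : Fin 2 → F, v ≠ 0 → (∀ i, v i ∈ K) →
      ∃ (c : F) (w : Fin 2 → F), (∀ i, w i ∈ K) ∧
        (m : Matrix (Fin 2) (Fin 2) F).mulVec v = c • w := by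
    intro v hv hvK
    rw [← mk_mem_canonical K _ (mulVec_ne_zero m hv), ← lin_mk m v hv, ← hm]
    exact Set.mem_image_of_mem _ ⟨v, hv, hvK, rfl⟩
  obtain ⟨a, u, hu, h1⟩ := key ![1, 0] (by simp)
    (by intro i; fin_cases i <;> simp [K.one_mem, K.zero_mem])
  obtain ⟨b, v, hv, h2⟩ := key ![0, 1] (by simp)
    (by intro i; fin_cases i <;> simp [K.one_mem, K.zero_mem])
  obtain ⟨c, w, hw, h3⟩ := key ![1, 1] (by simp)
    (by intro i; fin_cases i <;> simp [K.one_mem])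
  have hd := det_ne_zero m
  rw [Matrix.det_fin_two] at hd ⊢
  have h10 := congrFun h1 0
  have h11 := congrFun h1 1
  have h20 := congrFun h2 0
  have h21 := congrFun h2 1
  have h30 := congrFun h3 0
  have h31 := congrFun h3 1
  simp [Matrix.mulVec, dotProduct, Fin.sum_univ_two] at h10 h11 h20 h21 h30 h31
  rw [h10, h20] at h30
  rw [h11, h21] at h31
  rw [h10, h11, h20, h21] at hd ⊢
  set D := u 0 * v 1 - v 0 * u 1 with hD
  have hdD : a * u 0 * (b * v 1) - b * v 0 * (a * u 1) = a * b * D := by rw [hD]; ring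
  have hD0 : D ≠ 0 := by
    intro h
    rw [hdD, h] at hd
    simp at hd
  have hDK : D ∈ K := K.sub_mem (K.mul_mem (hu 0) (hv 1)) (K.mul_mem (hv 0) (hu 1))
  have ha : a * D = c * (w 0 * v 1 - v 0 * w 1) := by
    rw [hD]; linear_combination v 1 * h30 - v 0 * h31
  have hb : b * D = c * (u 0 * w 1 - w 0 * u 1) := by
    rw [hD]; linear_combination u 0 * h31 - u 1 * h30
  have e : a * b * D =
      c * c * (D⁻¹ * (w 0 * v 1 - v 0 * w 1) * (u 0 * w 1 - w 0 * u 1)) := by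
    have : a * b * D = D⁻¹ * (a * D) * (b * D) := by field_simp
    rw [this, ha, hb]; ring
  rw [hdD, e]
  refine IsSquare.mul ⟨c, rfl⟩ (hsq _ ?_)
  exact K.mul_mem (K.mul_mem (K.inv_mem hDK)
    (K.sub_mem (K.mul_mem (hw 0) (hv 1)) (K.mul_mem (hv 0) (hw 1))))
    (K.sub_mem (K.mul_mem (hu 0) (hw 1)) (K.mul_mem (hw 0) (hu 1)))

/-! ### Arithmetic of the finite fields -/

lemma isSquare_mul_iff [Finite F] (h2 : ringChar F ≠ 2) {a b : F} (ha : a ≠ 0) (hb : b ≠ 0) :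
    IsSquare (a * b) ↔ (IsSquare a ↔ IsSquare b) := by
  have := Fintype.ofFinite F
  rw [FiniteField.isSquare_iff h2 ha, FiniteField.isSquare_iff h2 hb,
    FiniteField.isSquare_iff h2 (mul_ne_zero ha hb), mul_pow]
  have hne := Ring.neg_one_ne_one_of_char_ne_two h2
  rcases FiniteField.pow_dichotomy h2 ha with h | h <;>
    rcases FiniteField.pow_dichotomy h2 hb with h' | h' <;> simp [h, h', hne]

lemma isSquare_map (σ : F ≃+* F) (x : F) : IsSquare (σ x) ↔ IsSquare x := by
  constructor
  · intro h
    simpa using h.map σ.symm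
  · exact fun h => h.map σ

/-- Elements of the subfield of order `√q` are squares, as `√q - 1` divides `(q - 1) / 2`. -/
lemma isSquare_of_mem [Finite F] (h2 : ringChar F ≠ 2) (K : Subfield F)
    (hK : Nat.card K ^ 2 = Nat.card F) {x : F} (hx : x ∈ K) : IsSquare x := by
  have := Fintype.ofFinite F
  have := Fintype.ofFinite K
  by_cases hx0 : x = 0
  · rw [hx0]; exact IsSquare.zero
  rw [FiniteField.isSquare_iff h2 hx0]
  have hodd : Nat.card F % 2 = 1 := by
    rw [Nat.card_eq_fintype_card]; exact FiniteField.odd_card_of_char_ne_two h2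
  have hKodd : Odd (Nat.card K) := by
    rw [← Nat.odd_iff, ← hK] at hodd
    exact (Nat.odd_pow_iff (by norm_num)).1 hodd
  have hp : x ^ (Nat.card K - 1) = 1 := by
    have := FiniteField.pow_card_sub_one_eq_one (⟨x, hx⟩ : K) (by simpa [Subtype.ext_iff] using hx0)
    rw [Nat.card_eq_fintype_card]
    simpa [Subtype.ext_iff] using this
  obtain ⟨t, ht⟩ := hKodd
  have : Fintype.card F / 2 = (Nat.card K - 1) * (t + 1) := by
    rw [← Nat.card_eq_fintype_card, ← hK, ht]
    have : (2 * t + 1) ^ 2 = 2 * (2 * t * (t + 1)) + 1 := by ring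
    rw [this, Nat.add_sub_cancel]
    omega
  rw [this, pow_mul, hp, one_pow]

/-- Every automorphism of a finite field is a power map, so it preserves each subfield. -/
lemma map_mem [Finite F] (K : Subfield F) (σ : F ≃+* F) {x : F} (hx : x ∈ K) : σ x ∈ K := by
  have := Fintype.ofFinite F
  obtain ⟨p, hp⟩ := CharP.exists F
  have := CharP.char_is_prime F p
  have : Fact p.Prime := ⟨this⟩
  let _ : Algebra (ZMod p) F := ZMod.algebra F p
  let σ' : F ≃ₐ[ZMod p] F := AlgEquiv.ofRingEquiv (f := σ) (by
    intro r
    exact DFunLike.congr_fun (Subsingleton.elim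
      ((σ : F →+* F).comp (algebraMap (ZMod p) F)) (algebraMap (ZMod p) F)) r)
  obtain ⟨n, hn⟩ := (FiniteField.bijective_frobeniusAlgEquivOfAlgebraic_pow (ZMod p) F).2 σ'
  have : σ x = x ^ (Fintype.card (ZMod p) ^ n.1) := by
    have := DFunLike.congr_fun hn x
    simp only [AlgEquiv.coe_pow, FiniteField.coe_frobeniusAlgEquivOfAlgebraic_iterate] at this
    exact this.symm
  rw [this]
  exact K.pow_mem hx _

/-! ### The two classes of Baer sublines -/

/-- The Baer sublines `g • PG(1,K)` for which the assertion that `det g` is a square has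
truth value `P`; thus `Orb K True` and `Orb K False` are the two classes. -/
def Orb (K : Subfield F) (P : Prop) : Set (Set (PG1 F)) :=
  {B | ∃ g : GL (Fin 2) F, (IsSquare (g : Matrix (Fin 2) (Fin 2) F).det ↔ P) ∧
    B = lin g '' canonicalSubline F K}

lemma det_mul' (g h : GL (Fin 2) F) :
    ((g * h : GL (Fin 2) F) : Matrix (Fin 2) (Fin 2) F).det =
      (g : Matrix (Fin 2) (Fin 2) F).det * (h : Matrix (Fin 2) (Fin 2) F).det := by
  rw [Units.val_mul, Matrix.det_mul]

lemma isSquare_det_mul [Finite F] (h2 : ringChar F ≠ 2) (g h : GL (Fin 2) F) :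
    IsSquare ((g * h : GL (Fin 2) F) : Matrix (Fin 2) (Fin 2) F).det ↔
      (IsSquare (g : Matrix (Fin 2) (Fin 2) F).det ↔
        IsSquare (h : Matrix (Fin 2) (Fin 2) F).det) := by
  rw [det_mul', isSquare_mul_iff h2 (det_ne_zero g) (det_ne_zero h)]

lemma isSquare_det_inv [Finite F] (h2 : ringChar F ≠ 2) (g : GL (Fin 2) F) :
    IsSquare ((g⁻¹ : GL (Fin 2) F) : Matrix (Fin 2) (Fin 2) F).det ↔
      IsSquare (g : Matrix (Fin 2) (Fin 2) F).det := by
  rw [← isSquare_det_mul h2, inv_mul_cancel]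
  simp

/-- The square class of `det g` is determined by the subline `g • PG(1,K)`. -/
lemma image_mem_Orb [Finite F] (h2 : ringChar F ≠ 2) (K : Subfield F)
    (hK : Nat.card K ^ 2 = Nat.card F) (g : GL (Fin 2) F) (P : Prop) :
    lin g '' canonicalSubline F K ∈ Orb K P ↔
      (IsSquare (g : Matrix (Fin 2) (Fin 2) F).det ↔ P) := by
  constructor
  · rintro ⟨h, hh, e⟩
    have e' : lin (h⁻¹ * g) '' canonicalSubline F K = canonicalSubline F K := by
      rw [lin_mul_image]
      exact lin_inv_image e.symm
    have := det_of_stab K (fun x hx => isSquare_of_mem h2 K hK hx) _ e'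
    rw [isSquare_det_mul h2, isSquare_det_inv h2] at this
    rw [← this, hh]
  · exact fun h => ⟨g, h, rfl⟩

lemma orbit_eq [Finite F] (h2 : ringChar F ≠ 2) (K : Subfield F) (g : GL (Fin 2) F) :
    MulAction.orbit (PSLsub F) (lin g '' canonicalSubline F K) =
      Orb K (IsSquare (g : Matrix (Fin 2) (Fin 2) F).det) := by
  ext B
  constructor
  · rintro ⟨⟨e, he⟩, rfl⟩
    obtain ⟨s, hs, rfl⟩ := mem_PSL he
    refine ⟨s * g, ?_, ?_⟩
    · rw [det_mul', hs, one_mul]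
    · rw [lin_mul_image]
      rfl
  · rintro ⟨h, hh, rfl⟩
    refine ⟨⟨lin (h * g⁻¹), lin_mem_PSL ?_⟩, ?_⟩
    · rw [isSquare_det_mul h2, isSquare_det_inv h2, hh]
    · change lin (h * g⁻¹) '' (lin g '' canonicalSubline F K) = _
      rw [← lin_mul_image, inv_mul_cancel_right]

lemma projSemilinear_image [Finite F] (K : Subfield F) (σ : F ≃+* F) (g h : GL (Fin 2) F) :
    projSemilinear F σ g '' (lin h '' canonicalSubline F K) =
      lin (g * Units.map (σ : F →+* F).mapMatrix.toMonoidHom h) '' canonicalSubline F K := by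
  have hσ : projSemilinear F σ 1 '' canonicalSubline F K = canonicalSubline F K := by
    apply Set.eq_of_subset_of_ncard_le
    · rintro _ ⟨_, ⟨v, hv, hvK, rfl⟩, rfl⟩
      rw [projSemilinear_mk σ 1 v hv (semilinear_ne_zero _ _ hv)]
      refine ⟨_, _, ?_, rfl⟩
      intro i
      rw [Units.val_one, Matrix.one_mulVec]
      exact map_mem K σ (hvK i)
    · rw [Set.ncard_image_of_injective _ (projSemilinear F σ 1).injective]
    · exact Set.toFinite _
  conv_rhs => rw [← hσ]
  rw [← Set.image_comp, ← Set.image_comp, ← Equiv.Perm.coe_mul, ← Equiv.Perm.coe_mul,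
    ← lin_def, ← lin_def, projSemilinear_mul, projSemilinear_mul]
  simp only [map_one, mul_one]
  rfl

/-- A semilinear map preserves or exchanges the classes according to whether the determinant of
its matrix is a square. -/
lemma projSemilinear_mem_Orb [Finite F] (h2 : ringChar F ≠ 2) (K : Subfield F)
    (hK : Nat.card K ^ 2 = Nat.card F) (σ : F ≃+* F) (g : GL (Fin 2) F) (P : Prop)
    (B : Set (PG1 F)) :
    projSemilinear F σ g '' B ∈ Orb K (IsSquare (g : Matrix (Fin 2) (Fin 2) F).det ↔ P) ↔
      B ∈ Orb K P := by
  have hdet : ∀ h : GL (Fin 2) F,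
      (IsSquare ((g * Units.map (σ : F →+* F).mapMatrix.toMonoidHom h : GL (Fin 2) F) :
        Matrix (Fin 2) (Fin 2) F).det ↔ (IsSquare (g : Matrix (Fin 2) (Fin 2) F).det ↔
          IsSquare (h : Matrix (Fin 2) (Fin 2) F).det)) := by
    intro h
    rw [isSquare_det_mul h2, coe_unitsMap]
    have : ((h : Matrix (Fin 2) (Fin 2) F).map (σ : F →+* F)).det =
        σ (h : Matrix (Fin 2) (Fin 2) F).det := by
      exact ((σ : F →+* F).map_det _).symm
    rw [this, isSquare_map]
  constructor
  · rintro ⟨h, hh, e⟩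
    -- the preimage subline comes from the matrix `σ⁻¹ (g⁻¹ h)`
    obtain ⟨k, hk⟩ : ∃ k : GL (Fin 2) F,
        g * Units.map (σ : F →+* F).mapMatrix.toMonoidHom k = h := by
      refine ⟨Units.map (σ.symm : F →+* F).mapMatrix.toMonoidHom (g⁻¹ * h), ?_⟩
      have : Units.map (σ : F →+* F).mapMatrix.toMonoidHom
          (Units.map (σ.symm : F →+* F).mapMatrix.toMonoidHom (g⁻¹ * h)) = g⁻¹ * h := by
        ext i j
        exact σ.apply_symm_apply _
      rw [this, mul_inv_cancel_left]
    refine ⟨k, ?_, ?_⟩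
    · have := hdet k
      rw [hk, hh] at this
      tauto
    · apply image_injective (projSemilinear F σ g)
      change _ = projSemilinear F σ g '' _
      rw [projSemilinear_image, hk]
      exact e
  · rintro ⟨h, hh, rfl⟩
    rw [projSemilinear_image, image_mem_Orb h2 K hK, hdet, hh]

lemma lin_mem_Orb [Finite F] (h2 : ringChar F ≠ 2) (K : Subfield F)
    (hK : Nat.card K ^ 2 = Nat.card F) (g : GL (Fin 2) F) (P : Prop) (B : Set (PG1 F)) :
    lin g '' B ∈ Orb K (IsSquare (g : Matrix (Fin 2) (Fin 2) F).det ↔ P) ↔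
      B ∈ Orb K P := projSemilinear_mem_Orb h2 K hK (RingEquiv.refl F) g P B

lemma lin_mem_Orb_of_not [Finite F] (h2 : ringChar F ≠ 2) (K : Subfield F)
    (hK : Nat.card K ^ 2 = Nat.card F) {g : GL (Fin 2) F}
    (hg : ¬ IsSquare (g : Matrix (Fin 2) (Fin 2) F).det) (B : Set (PG1 F)) :
    lin g '' B ∈ Orb K False ↔ B ∈ Orb K True := by
  rw [← lin_mem_Orb h2 K hK g True]
  simp [hg]

/-- Transporting a family of sets along a permutation preserves its cardinality. -/
lemma card_eq_of_image (e : Equiv.Perm (PG1 F)) (S T : Set (Set (PG1 F)))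
    (h : ∀ B, e '' B ∈ T ↔ B ∈ S) : Nat.card S = Nat.card T := by
  have : T = (fun B : Set (PG1 F) => e '' B) '' S := by
    ext C
    constructor
    · intro hC
      refine ⟨e ⁻¹' C, ?_, Set.image_preimage_eq _ e.surjective⟩
      rw [← h, Set.image_preimage_eq _ e.surjective]
      exact hC
    · rintro ⟨B, hB, rfl⟩
      exact (h B).2 hB
  rw [this, Nat.card_image_of_injective (image_injective e)]

lemma Orb_disjoint [Finite F] (h2 : ringChar F ≠ 2) (K : Subfield F)
    (hK : Nat.card K ^ 2 = Nat.card F) : Orb K True ∩ Orb K False = ∅ := by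
  ext B
  simp only [Set.mem_inter_iff, Set.mem_empty_iff_false, iff_false, not_and]
  rintro ⟨g, hg, rfl⟩
  rw [image_mem_Orb h2 K hK]
  tauto

lemma Orb_union (K : Subfield F) :
    Orb K True ∪ Orb K False = {s : Set (PG1 F) | IsBaerSubline F K s} := by
  ext B
  constructor
  · rintro (⟨g, -, rfl⟩ | ⟨g, -, rfl⟩) <;> exact ⟨g, rfl⟩
  · rintro ⟨g, rfl⟩
    by_cases hg : IsSquare (g : Matrix (Fin 2) (Fin 2) F).det
    · exact Or.inl ⟨g, by tauto, rfl⟩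
    · exact Or.inr ⟨g, by tauto, rfl⟩

lemma flagTransitive_Orb [Finite F] (h2 : ringChar F ≠ 2) (K : Subfield F)
    (hK : Nat.card K ^ 2 = Nat.card F) (P : Prop) (G' : Subgroup (Equiv.Perm (PG1 F)))
    (hG : PSLsub F ≤ G') : FlagTransitive G' (Orb K P) := by
  rintro _ ⟨g, hg, rfl⟩ _ ⟨h, hh, rfl⟩ _ ⟨x, hx, rfl⟩ _ ⟨y, hy, rfl⟩
  obtain ⟨m, hm, rfl⟩ := exists_stab_e0 K hx
  obtain ⟨n, hn, rfl⟩ := exists_stab_e0 K hy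
  have sq := det_of_stab K (fun x hx => isSquare_of_mem h2 K hK hx)
  have hsm := sq m hm
  have hsn := sq n hn
  refine ⟨⟨lin (h * n * m⁻¹ * g⁻¹), hG (lin_mem_PSL ?_)⟩, ?_, ?_⟩
  · rw [isSquare_det_mul h2, isSquare_det_mul h2, isSquare_det_mul h2, isSquare_det_inv h2,
      isSquare_det_inv h2]
    tauto
  · change lin _ '' _ = _
    rw [lin_mul_image, lin_inv_image rfl, lin_mul_image, lin_inv_image hm, lin_mul_image, hn]
  · change lin (h * n * m⁻¹ * g⁻¹) (lin g (lin m (e0 F))) = _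
    simp

/-! ### Counting -/

lemma card_canonical [Finite F] (K : Subfield F) : Nat.card (canonicalSubline F K)
    = Nat.card K + 1 := by
  let f : Option K → PG1 F := fun o => o.elim (e0 F) (fun a => mk F ![(a : F), 1] (by simp))
  have hf : Function.Injective f := by
    rintro (_ | a) (_ | b) h
    · rfl
    · obtain ⟨c, hc⟩ := (mk_eq_mk_iff' F _ _ _ _).1 h
      have h1 := congrFun hc 1
      have h0 := congrFun hc 0
      simp at h1 h0
      simp [h1] at h0
    · obtain ⟨c, hc⟩ := (mk_eq_mk_iff' F _ _ _ _).1 h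
      have h1 := congrFun hc 1
      simp at h1
    · obtain ⟨c, hc⟩ := (mk_eq_mk_iff' F _ _ _ _).1 h
      have h1 := congrFun hc 1
      have h0 := congrFun hc 0
      simp at h1 h0
      simp [h1] at h0
      rw [h0]
  have hr : canonicalSubline F K = Set.range f := by
    ext p
    constructor
    · rintro ⟨v, hv, hvK, rfl⟩
      by_cases h1 : v 1 = 0
      · refine ⟨none, ?_⟩
        have h0 : v 0 ≠ 0 := by
          intro h0
          apply hv
          ext i
          fin_cases i <;> simp [h0, h1]
        refine (mk_eq_mk_iff' F _ _ _ _).2 ⟨(v 0)⁻¹, ?_⟩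
        ext i
        fin_cases i <;> simp [h0, h1]
      · refine ⟨some ⟨v 0 / v 1, K.div_mem (hvK 0) (hvK 1)⟩, ?_⟩
        refine (mk_eq_mk_iff' F _ _ _ _).2 ⟨(v 1)⁻¹, ?_⟩
        ext i
        fin_cases i
        · simp; field_simp
        · simp [h1]
    · rintro ⟨_ | a, rfl⟩
      · exact ⟨_, _, by intro i; fin_cases i <;> simp [K.one_mem, K.zero_mem], rfl⟩
      · exact ⟨_, _, by intro i; fin_cases i <;> simp [K.one_mem], rfl⟩
  rw [hr, Nat.card_range_of_injective hf, Finite.card_option]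

/-- The matrix `diag(a, 1)`. -/
def dg (a : Fˣ) : GL (Fin 2) F := colGL ![(a : F), 0] ![0, 1] (by simp)

lemma dg_val (a : Fˣ) : (dg a : Matrix (Fin 2) (Fin 2) F) = !![(a : F), 0; 0, 1] := rfl

lemma dg_mul (a b : Fˣ) : dg (a * b) = dg a * dg b := by
  ext i j
  rw [Units.val_mul, dg_val, dg_val, dg_val]
  fin_cases i <;> fin_cases j <;> simp

lemma dg_e0 (a : Fˣ) : lin (dg a) (e0 F) = e0 F := by
  rw [e0, lin_mk, mk_eq_mk_iff']
  refine ⟨a, ?_⟩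
  ext i
  rw [dg_val]
  fin_cases i <;> simp

lemma dg_e1 (a : Fˣ) : lin (dg a) (e1 F) = e1 F := by
  rw [e1, lin_mk, mk_eq_mk_iff']
  refine ⟨1, ?_⟩
  ext i
  rw [dg_val]
  fin_cases i <;> simp

lemma e0_mem (K : Subfield F) : e0 F ∈ canonicalSubline F K :=
  ⟨_, _, by intro i; fin_cases i <;> simp [K.one_mem, K.zero_mem], rfl⟩

lemma e1_mem (K : Subfield F) : e1 F ∈ canonicalSubline F K :=
  ⟨_, _, by intro i; fin_cases i <;> simp [K.one_mem, K.zero_mem], rfl⟩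

lemma dg_stab [Finite F] (K : Subfield F) (a : Fˣ) :
    lin (dg a) '' canonicalSubline F K = canonicalSubline F K ↔ (a : F) ∈ K := by
  constructor
  · intro h
    have h1 : mk F ![(1 : F), 1] (by simp) ∈ canonicalSubline F K :=
      ⟨_, _, by intro i; fin_cases i <;> simp [K.one_mem], rfl⟩
    have h3 := Set.mem_image_of_mem (lin (dg a)) h1
    rw [h, lin_mk, mk_mem_canonical] at h3
    obtain ⟨c, w, hw, e⟩ := h3
    have h0 := congrFun e 0
    have h1 := congrFun e 1
    rw [dg_val] at h0 h1
    simp at h0 h1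
    have hw1 : w 1 ≠ 0 := by
      intro hw1
      simp [hw1] at h1
    have : (a : F) = w 0 / w 1 := by
      rw [h0, eq_div_iff hw1]
      linear_combination - w 0 * h1
    rw [this]
    exact K.div_mem (hw 0) (hw 1)
  · intro ha
    apply lin_canonical
    intro i j
    rw [dg_val]
    fin_cases i <;> fin_cases j <;> simp [ha, K.one_mem, K.zero_mem]

/-- The Baer sublines through `[1 : 0]` and `[0 : 1]` are the images of the canonical one under
the diagonal matrices. -/
lemma exists_dg [Finite F] (K : Subfield F) {B : Set (PG1 F)} (hB : IsBaerSubline F K B)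
    (h0 : e0 F ∈ B) (h1 : e1 F ∈ B) :
    ∃ a : Fˣ, lin (dg a) '' canonicalSubline F K = B := by
  obtain ⟨g, rfl⟩ := hB
  obtain ⟨_, ⟨u, hu, huK, rfl⟩, e0'⟩ := h0
  obtain ⟨_, ⟨v, hv, hvK, rfl⟩, e1'⟩ := h1
  rw [lin_def, lin_mk, e0, mk_eq_mk_iff'] at e0'
  rw [lin_def, lin_mk, e1, mk_eq_mk_iff'] at e1'
  obtain ⟨a, ha⟩ := e0'
  obtain ⟨b, hb⟩ := e1'
  have ha0 : a ≠ 0 := by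
    rintro rfl
    exact mulVec_ne_zero g hu (by simpa using ha.symm)
  have hb0 : b ≠ 0 := by
    rintro rfl
    exact mulVec_ne_zero g hv (by simpa using hb.symm)
  have ha0' := congrFun ha 0
  have ha1' := congrFun ha 1
  have hb0' := congrFun hb 0
  have hb1' := congrFun hb 1
  simp [Matrix.mulVec, dotProduct, Fin.sum_univ_two] at ha0' ha1' hb0' hb1'
  have hd : u 0 * v 1 - v 0 * u 1 ≠ 0 := by
    intro hd
    have : a * b = (g : Matrix (Fin 2) (Fin 2) F).det * (u 0 * v 1 - v 0 * u 1) := by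
      rw [Matrix.det_fin_two]
      set G := (g : Matrix (Fin 2) (Fin 2) F)
      linear_combination b * ha0' + (G 0 0 * u 0 + G 0 1 * u 1) * hb1'
        - (G 1 0 * u 0 + G 1 1 * u 1) * hb0'
    rw [hd, mul_zero] at this
    exact mul_ne_zero ha0 hb0 this
  refine ⟨Units.mk0 (a / b) (div_ne_zero ha0 hb0), ?_⟩
  rw [lin_def]
  conv_rhs => rw [← colGL_canonical K u v hd huK hvK, ← lin_mul_image]
  rw [lin_eq_of_smul (g := g * colGL u v hd) (h := dg (Units.mk0 (a / b) (div_ne_zero ha0 hb0))) b]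
  rw [Units.val_mul, colGL_val, dg_val]
  ext i j
  fin_cases i <;> fin_cases j <;> simp [Matrix.mul_apply, Fin.sum_univ_two]
  · rw [← ha0']; field_simp
  · exact hb0'.symm
  · exact ha1'.symm
  · exact hb1'.symm

/-- There are `(q - 1) / (√q - 1) = √q + 1` Baer sublines through `[1 : 0]` and `[0 : 1]`: they
form a torsor under `Fˣ / Kˣ`. -/
lemma card_base [Finite F] (K : Subfield F) (hK : Nat.card K ^ 2 = Nat.card F)
    : Nat.card {B : Set (PG1 F) | IsBaerSubline F K B ∧ e0 F ∈ B ∧ e1 F ∈ B} =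
    Nat.card K + 1 := by
  let ψ : Fˣ → Set (PG1 F) := fun a => lin (dg a) '' canonicalSubline F K
  have hr : {B : Set (PG1 F) | IsBaerSubline F K B ∧ e0 F ∈ B ∧ e1 F ∈ B} = Set.range ψ := by
    ext B
    constructor
    · rintro ⟨hB, h0, h1⟩
      exact exists_dg K hB h0 h1
    · rintro ⟨a, rfl⟩
      exact ⟨⟨dg a, rfl⟩, ⟨e0 F, e0_mem K, dg_e0 a⟩, ⟨e1 F, e1_mem K, dg_e1 a⟩⟩
  let H : Subgroup Fˣ := (Units.map (K.subtype : K →* F)).range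
  have hH : ∀ a : Fˣ, a ∈ H ↔ (a : F) ∈ K := by
    intro a
    constructor
    · rintro ⟨b, rfl⟩
      exact b.1.2
    · intro ha
      have h0 : (⟨a, ha⟩ : K) ≠ 0 := by simp [Subtype.ext_iff]
      exact ⟨Units.mk0 ⟨a, ha⟩ h0, by ext; rfl⟩
  have hker : ∀ a b : Fˣ, ψ a = ψ b ↔ a⁻¹ * b ∈ H := by
    intro a b
    rw [hH, ← dg_stab K]
    refine Iff.trans ?_ (image_injective (lin (dg a))).eq_iff
    change lin (dg a) '' _ = lin (dg b) '' _ ↔ lin (dg a) '' _ = lin (dg a) '' _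
    rw [← lin_mul_image, ← dg_mul, mul_inv_cancel_left]
    exact eq_comm
  have hcard : Nat.card (Set.range ψ) = Nat.card (Fˣ ⧸ H) := by
    have e : Setoid.ker ψ = QuotientGroup.leftRel H := by
      ext a b
      rw [QuotientGroup.leftRel_apply, ← hker]
      rfl
    rw [← Nat.card_congr (Setoid.quotientKerEquivRange ψ), e]
    rfl
  have hHc : Nat.card H = Nat.card K - 1 := by
    rw [← Nat.card_units, Nat.card_congr (MonoidHom.ofInjective (f := Units.map (K.subtype : K →* F))
      (Units.map_injective K.subtype_injective)).toEquiv]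
  have hmul := Subgroup.card_eq_card_quotient_mul_card_subgroup H
  rw [hHc, Nat.card_units, ← hK] at hmul
  rw [hr, hcard]
  have h1 : 1 < Nat.card K := Finite.one_lt_card
  obtain ⟨t, ht⟩ := Nat.exists_eq_add_of_lt h1
  rw [ht] at hmul ⊢
  have e1 : (1 + t + 1) ^ 2 - 1 = (1 + t + 1 + 1) * (1 + t + 1 - 1) := by
    rw [Nat.add_sub_cancel]
    have : (1 + t + 1) ^ 2 = (1 + t + 1 + 1) * (1 + t) + 1 := by ring
    rw [this, Nat.add_sub_cancel]
  rw [e1] at hmul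
  exact (Nat.eq_of_mul_eq_mul_right (by omega) hmul).symm

lemma isDesign_Orb [Finite F] (h2 : ringChar F ≠ 2) (K : Subfield F)
    (hK : Nat.card K ^ 2 = Nat.card F) (P : Prop) (hP : P = True ∨ P = False) :
    IsDesign (Orb K P) (Nat.card K + 1) ((Nat.card K + 1) / 2) := by
  constructor
  · rintro _ ⟨g, -, rfl⟩
    rw [Nat.card_image_of_injective (lin g).injective, card_canonical]
  · intro x y hxy
    obtain ⟨g, rfl, rfl⟩ := exists_lin_pair hxy
    have hmem : ∀ (e : Equiv.Perm (PG1 F)) (B : Set (PG1 F)) (z : PG1 F),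
        e z ∈ e '' B ↔ z ∈ B := fun e B z => e.injective.mem_set_image
    let S : Prop → Set (Set (PG1 F)) := fun Q =>
      {B | B ∈ Orb K Q ∧ lin g (e0 F) ∈ B ∧ lin g (e1 F) ∈ B}
    obtain ⟨n, hn⟩ := FiniteField.exists_nonsquare h2
    have hn0 : n ≠ 0 := by rintro rfl; exact hn IsSquare.zero
    -- a conjugate of `diag(n, 1)` fixes both points and exchanges the two classes
    have hTF : Nat.card (S True) = Nat.card (S False) := by
      let d := dg (Units.mk0 n hn0)
      have hd : ¬ IsSquare (d : Matrix (Fin 2) (Fin 2) F).det := by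
        change ¬ IsSquare (Matrix.det !![n, 0; 0, 1])
        simpa using hn
      have hd' : ¬ IsSquare ((g * d * g⁻¹ : GL (Fin 2) F) : Matrix (Fin 2) (Fin 2) F).det := by
        rw [isSquare_det_mul h2, isSquare_det_mul h2, isSquare_det_inv h2]
        tauto
      have f0 : lin (g * d * g⁻¹) (lin g (e0 F)) = lin g (e0 F) := by
        simp [d, dg_e0]
      have f1 : lin (g * d * g⁻¹) (lin g (e1 F)) = lin g (e1 F) := by
        simp [d, dg_e1]
      apply card_eq_of_image (lin (g * d * g⁻¹))
      intro B
      refine and_congr (lin_mem_Orb_of_not h2 K hK hd' B) (and_congr ?_ ?_)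
      · nth_rw 1 [← f0]; exact hmem _ _ _
      · nth_rw 1 [← f1]; exact hmem _ _ _
    have hsum : Nat.card (S True) + Nat.card (S False) = Nat.card K + 1 := by
      have hu : S True ∪ S False =
          {B | IsBaerSubline F K B ∧ lin g (e0 F) ∈ B ∧ lin g (e1 F) ∈ B} := by
        ext B
        have := Set.ext_iff.1 (Orb_union K) B
        simp only [Set.mem_union, Set.mem_ofPred_eq] at this
        simp only [Set.mem_union, Set.mem_ofPred_eq, S, ← this]
        tauto
      have hdis : Disjoint (S True) (S False) := by
        rw [Set.disjoint_left]
        rintro B ⟨h, -⟩ ⟨h', -⟩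
        have : B ∈ Orb K True ∩ Orb K False := ⟨h, h'⟩
        rwa [Orb_disjoint h2 K hK] at this
      have := Set.ncard_union_eq hdis (Set.toFinite _) (Set.toFinite _)
      rw [hu] at this
      simp only [← Nat.card_coe_set_eq] at this
      rw [← this, ← card_base K hK]
      symm
      apply card_eq_of_image (lin g)
      intro B
      refine and_congr ?_ (and_congr (hmem _ _ _) (hmem _ _ _))
      constructor
      · rintro ⟨h, hh⟩
        exact ⟨g⁻¹ * h, by rw [lin_def, lin_mul_image]; exact (lin_inv_image hh).symm⟩
      · rintro ⟨h, rfl⟩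
        exact ⟨g * h, (lin_mul_image g h _).symm⟩
    change Nat.card (S P) = _
    rcases hP with rfl | rfl <;> omega

end Aux

end FT


/-- Let `q` be an odd square prime power, realized as the cardinality of a
finite field `F` with a subfield `K` satisfying `|K|² = q`.  Then `PSL(2,q)` partitions the
set of Baer sublines of `PG(1,q)` into exactly two orbits `𝓑₁ = orbit s₁`, `𝓑₂ = orbit s₂`
of equal size; for `i = 1, 2` the incidence structure `D_i = (PG(1,q), 𝓑_i)` is a
`2-(q+1, √q+1, (√q+1)/2)` design; `D₁` and `D₂` are isomorphic via any element of
`PΓL(2,q) ∖ PΣL(2,q)`; and every group `G` with `PSL(2,q) ⊴ G ≤ PΣL(2,q)` acts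
flag-transitively on `D_i`.  In particular, for `q = 25` each `D_i` is a `2-(26,6,3)`
design admitting `PSL(2,25) ⊴ G ≤ PΣL(2,25)` flag-transitively. -/
theorem stmt_3 (q : ℕ) (hodd : Odd q)
    (F : Type) [Field F] [Fintype F] (hF : Fintype.card F = q)
    (K : Subfield F) (hK : Nat.card K ^ 2 = q) :
    ∃ s₁ s₂ : Set (PG1 F), IsBaerSubline F K s₁ ∧ IsBaerSubline F K s₂ ∧
      -- the two `PSL(2,q)`-orbits are disjoint, …
      MulAction.orbit (PSLsub F) s₁ ∩ MulAction.orbit (PSLsub F) s₂ = ∅ ∧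
      -- … together exhaust the Baer sublines, …
      MulAction.orbit (PSLsub F) s₁ ∪ MulAction.orbit (PSLsub F) s₂ =
        {s : Set (PG1 F) | IsBaerSubline F K s} ∧
      -- … and have equal size:
      Nat.card (MulAction.orbit (PSLsub F) s₁) =
        Nat.card (MulAction.orbit (PSLsub F) s₂) ∧
      -- each orbit is the block set of a `2-(q+1, √q+1, (√q+1)/2)` design:
      IsDesign (MulAction.orbit (PSLsub F) s₁) (Nat.card K + 1) ((Nat.card K + 1) / 2) ∧
      IsDesign (MulAction.orbit (PSLsub F) s₂) (Nat.card K + 1) ((Nat.card K + 1) / 2) ∧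
      -- `D₁ ≅ D₂` via any element of `PΓL(2,q) ∖ PΣL(2,q)`:
      (∀ g : Equiv.Perm (PG1 F), g ∈ PGammaLsub F → g ∉ PSigmaLsub F →
        ∀ B : Set (PG1 F), B ∈ MulAction.orbit (PSLsub F) s₁ ↔
          g '' B ∈ MulAction.orbit (PSLsub F) s₂) ∧
      -- every `PSL(2,q) ⊴ G ≤ PΣL(2,q)` is flag-transitive on `D₁` and `D₂`:
      (∀ G' : Subgroup (Equiv.Perm (PG1 F)), PSLsub F ≤ G' → G' ≤ PSigmaLsub F →
        FlagTransitive G' (MulAction.orbit (PSLsub F) s₁) ∧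
        FlagTransitive G' (MulAction.orbit (PSLsub F) s₂)) ∧
      -- in particular, for `q = 25` each `D_i` is a `2-(26,6,3)` design:
      (q = 25 → Nat.card K = 5 ∧ Nat.card (PG1 F) = 26 ∧
        IsDesign (MulAction.orbit (PSLsub F) s₁) 6 3 ∧
        IsDesign (MulAction.orbit (PSLsub F) s₂) 6 3) := by
  have h2 : ringChar F ≠ 2 := by
    intro h
    have := FiniteField.even_card_iff_char_two.1 h
    rw [hF] at this
    rw [Nat.odd_iff] at hodd
    omega
  have hK' : Nat.card K ^ 2 = Nat.card F := by rw [hK, Nat.card_eq_fintype_card, hF]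
  obtain ⟨n, hn⟩ := FiniteField.exists_nonsquare h2
  have hn0 : n ≠ 0 := by rintro rfl; exact hn IsSquare.zero
  have hd : ¬ IsSquare (dg (Units.mk0 n hn0) : Matrix (Fin 2) (Fin 2) F).det := by
    change ¬ IsSquare (Matrix.det !![n, 0; 0, 1])
    simpa using hn
  have o1 : MulAction.orbit (PSLsub F) (lin 1 '' canonicalSubline F K) = Orb K True := by
    rw [orbit_eq h2]
    simp
  have o2 : MulAction.orbit (PSLsub F)
      (lin (dg (Units.mk0 n hn0)) '' canonicalSubline F K) = Orb K False := by
    rw [orbit_eq h2, eq_false hd]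
  have d1 := isDesign_Orb h2 K hK' True (Or.inl rfl)
  have d2 := isDesign_Orb h2 K hK' False (Or.inr rfl)
  refine ⟨_, _, ⟨1, rfl⟩, ⟨dg (Units.mk0 n hn0), rfl⟩, ?_⟩
  rw [lin_def, lin_def, o1, o2]
  refine ⟨Orb_disjoint h2 K hK', Orb_union K, ?_, d1, d2, ?_, ?_, ?_⟩
  · exact card_eq_of_image _ _ _ (lin_mem_Orb_of_not h2 K hK' hd)
  · intro e he hne B
    obtain ⟨σ, g, rfl⟩ := mem_PGamma he
    have hg : ¬ IsSquare (g : Matrix (Fin 2) (Fin 2) F).det := fun hg => hne (mem_PSigma hg)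
    rw [← projSemilinear_mem_Orb h2 K hK' σ g True B]
    simp [hg]
  · intro G' hG _
    exact ⟨flagTransitive_Orb h2 K hK' True G' hG, flagTransitive_Orb h2 K hK' False G' hG⟩
  · intro hq
    have hk : Nat.card K = 5 := by
      rw [hq] at hK
      nlinarith
    rw [hk] at d1 d2
    refine ⟨hk, ?_, d1, d2⟩
    rw [Projectivization.card_of_finrank_two F (Fin 2 → F) (by simp), Nat.card_eq_fintype_card,
      hF, hq]
end

section
/- Let q ≥ 4 be a power of 2. In the transitive action of PSL(2,q) on the right cosets of a dihedral subgroup D_{2(q−1)} of order 2(q−1), the subdegrees are 1, the value q−1 occurring with multiplicity q/2 − 1, and 2(q−1) occurring once. In the transitive action of PSL(2,q) on the right cosets of a dihedral subgroup D_{2(q+1)} of order 2(q+1), the subdegrees are 1 and the value q+1 occurring with multiplicity q/2 − 1. -/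
open Matrix

/-!
In characteristic two `PSL(2, q) = SL(2, q)`, and an element squares to `1` exactly when its trace
is zero. Let `H` be dihedral of order `2n` with `n = q ± 1`, and `C` its rotation subgroup, which
has odd order `n`.

A nontrivial rotation `c` has centralizer exactly `C`: elements commuting with `c` lie in `F[c]`,
which gives at most `2q < 3n` of them, no involution commutes with `c`, and `n` divides the order
of the centralizer (`centralizer_rotation`). Moreover a conjugate of `c` that commutes with `c` is
`c` or `c⁻¹`. Hence for `g ∉ H` the intersection `H ∩ gHg⁻¹` contains no nontrivial rotation
(`mul_self_of_conj`), so it has order at most two, and the nontrivial subdegrees are `n`, when the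
point is fixed by exactly one reflection, and `2n`, when it is fixed by none (`orbit_cases`).

All involutions are conjugate with centralizers of order `q`, so each of the `n` reflections fixes
`q / 2` cosets (`card_fixed_reflection`). Counting pairs (reflection, fixed coset) gives
`n + a * n = n * (q / 2)` for the multiplicity `a` of `n`, and the multiplicity of `2n` follows
from `|G| = q (q - 1) (q + 1)` (`subdegrees`).
-/

/-! ### Group-theoretic properties of `SL(2, q)` -/


/-- The properties of the group `SL(2, q)`, `q` even, on which the computation of subdegrees rests:
its order, the conjugacy of involutions (any one is carried to any other by exactly `q` elements),
and, for `c` not squaring to `1`, its centralizer and the conjugates of `c` commuting with `c`. -/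
structure IsSL2Like (q : ℕ) (G : Type*) [Group G] : Prop where
  card_eq : Nat.card G = q * ((q - 1) * (q + 1))
  card_conj : ∀ s t : G, s ≠ 1 → s * s = 1 → t ≠ 1 → t * t = 1 →
    Nat.card {g : G // g * s * g⁻¹ = t} = q
  card_centralizer_le : ∀ c : G, c * c ≠ 1 → Nat.card {g : G // g * c = c * g} ≤ 2 * q
  involution_centralizer : ∀ c t : G, t ≠ 1 → t * t = 1 → t * c = c * t → c * c = 1
  conj_eq : ∀ c g : G, c * c ≠ 1 → (g * c * g⁻¹) * c = c * (g * c * g⁻¹) →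
    g * c * g⁻¹ = c ∨ g * c * g⁻¹ = c⁻¹

theorem IsSL2Like.congr {q : ℕ} {G G' : Type*} [Group G] [Group G'] (e : G ≃* G')
    (h : IsSL2Like q G) : IsSL2Like q G' where
  card_eq := by rw [← Nat.card_congr e.toEquiv, h.card_eq]
  card_conj s t hs hs2 ht ht2 := by
    rw [← h.card_conj (e.symm s) (e.symm t) (by simpa using hs) (by simp [← map_mul, hs2])
      (by simpa using ht) (by simp [← map_mul, ht2])]
    refine (Nat.card_congr (e.toEquiv.subtypeEquiv fun g => ?_)).symm
    rw [← e.injective.eq_iff]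
    simp
  card_centralizer_le c hc := by
    refine le_trans (le_of_eq ?_) (h.card_centralizer_le (e.symm c) ?_)
    · refine (Nat.card_congr (e.toEquiv.subtypeEquiv fun g => ?_)).symm
      rw [← e.injective.eq_iff]
      simp
    · rwa [← map_mul, Ne, EmbeddingLike.map_eq_one_iff]
  involution_centralizer c t ht ht2 hc := by
    have := h.involution_centralizer (e.symm c) (e.symm t) (by simpa using ht)
      (by simp [← map_mul, ht2]) (by simp [← map_mul, hc])
    simpa [← map_mul] using this
  conj_eq c g hc hg := by
    have := h.conj_eq (e.symm c) (e.symm g) (by rwa [← map_mul, Ne, EmbeddingLike.map_eq_one_iff])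
      (by simp only [← map_mul, ← map_inv, hg])
    simpa only [← map_mul, ← map_inv, e.symm.injective.eq_iff] using this

/-! ### The group `SL(2, q)` in characteristic two -/

section SL2

variable {F : Type*} [Field F]

theorem SL2.ext_iff' (A B : SpecialLinearGroup (Fin 2) F) :
    A = B ↔ A 0 0 = B 0 0 ∧ A 0 1 = B 0 1 ∧ A 1 0 = B 1 0 ∧ A 1 1 = B 1 1 := by
  refine (Matrix.SpecialLinearGroup.ext_iff A B).trans ?_
  simp [Fin.forall_fin_two, and_assoc]

theorem SL2.det_eq (A : SpecialLinearGroup (Fin 2) F) :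
    A 0 0 * A 1 1 - A 0 1 * A 1 0 = 1 :=
  (Matrix.det_fin_two _).symm.trans A.det_coe

theorem SL2.mul_00 (A B : SpecialLinearGroup (Fin 2) F) :
    (A * B) 0 0 = A 0 0 * B 0 0 + A 0 1 * B 1 0 := by
  simp [Matrix.mul_apply, Fin.sum_univ_two]
theorem SL2.mul_01 (A B : SpecialLinearGroup (Fin 2) F) :
    (A * B) 0 1 = A 0 0 * B 0 1 + A 0 1 * B 1 1 := by
  simp [Matrix.mul_apply, Fin.sum_univ_two]
theorem SL2.mul_10 (A B : SpecialLinearGroup (Fin 2) F) :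
    (A * B) 1 0 = A 1 0 * B 0 0 + A 1 1 * B 1 0 := by
  simp [Matrix.mul_apply, Fin.sum_univ_two]
theorem SL2.mul_11 (A B : SpecialLinearGroup (Fin 2) F) :
    (A * B) 1 1 = A 1 0 * B 0 1 + A 1 1 * B 1 1 := by
  simp [Matrix.mul_apply, Fin.sum_univ_two]

theorem SL2.inv_entries (A : SpecialLinearGroup (Fin 2) F) :
    A⁻¹ 0 0 = A 1 1 ∧ A⁻¹ 0 1 = - A 0 1 ∧ A⁻¹ 1 0 = - A 1 0 ∧ A⁻¹ 1 1 = A 0 0 := by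
  rw [SpecialLinearGroup.SL2_inv_expl]; simp

theorem SL2.one_entries :
    (1 : SpecialLinearGroup (Fin 2) F) 0 0 = 1 ∧ (1 : SpecialLinearGroup (Fin 2) F) 0 1 = 0 ∧
    (1 : SpecialLinearGroup (Fin 2) F) 1 0 = 0 ∧ (1 : SpecialLinearGroup (Fin 2) F) 1 1 = 1 := by
  simp

theorem SL2.exists_of_det (a b c d : F) (h : a * d - b * c = 1) :
    ∃ g : SpecialLinearGroup (Fin 2) F, g 0 0 = a ∧ g 0 1 = b ∧ g 1 0 = c ∧ g 1 1 = d :=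
  ⟨⟨!![a, b; c, d], by rw [Matrix.det_fin_two_of, h]⟩, by simp⟩

/-- By Cayley–Hamilton in characteristic two, `A ^ 2 = 1` exactly when the trace vanishes. -/
theorem SL2.mul_self_eq_one_iff (h2 : (2 : F) = 0) (A : SpecialLinearGroup (Fin 2) F) :
    A * A = 1 ↔ A 0 0 = A 1 1 := by
  rw [SL2.ext_iff']
  obtain ⟨o1, o2, o3, o4⟩ := SL2.one_entries (F := F)
  simp only [SL2.mul_00, SL2.mul_01, SL2.mul_10, SL2.mul_11, o1, o2, o3, o4]
  have hA := SL2.det_eq A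
  generalize A 0 0 = a at *
  generalize A 0 1 = b at *
  generalize A 1 0 = c at *
  generalize A 1 1 = d at *
  constructor
  · rintro ⟨h00, h01, h10, h11⟩
    by_contra hne
    have hs : a + d ≠ 0 := fun h => hne (by linear_combination h - d * h2)
    have hb : b = 0 := by
      have : (a + d) * b = 0 := by linear_combination h01
      simpa [hs] using this
    subst hb
    have : (a + d) * (a + d) = 0 := by linear_combination h00 + h11 + 2 * hA + 2 * h2
    simp [hs] at this
  · rintro rfl
    refine ⟨?_, ?_, ?_, ?_⟩
    · linear_combination hA + b * c * h2
    · linear_combination a * b * h2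
    · linear_combination a * c * h2
    · linear_combination hA + b * c * h2

theorem SL2.commute_iff (A B : SpecialLinearGroup (Fin 2) F) :
    A * B = B * A ↔ A 0 1 * B 1 0 = B 0 1 * A 1 0 ∧
      A 0 1 * (B 0 0 - B 1 1) = B 0 1 * (A 0 0 - A 1 1) ∧
      A 1 0 * (B 0 0 - B 1 1) = B 1 0 * (A 0 0 - A 1 1) := by
  rw [SL2.ext_iff']
  simp only [SL2.mul_00, SL2.mul_01, SL2.mul_10, SL2.mul_11]
  constructor
  · rintro ⟨h00, h01, h10, h11⟩
    refine ⟨?_, ?_, ?_⟩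
    · linear_combination h00
    · linear_combination - h01
    · linear_combination h10
  · rintro ⟨h1, h2, h3⟩
    refine ⟨?_, ?_, ?_, ?_⟩
    · linear_combination h1
    · linear_combination - h2
    · linear_combination h3
    · linear_combination - h1

theorem SL2.trace_conj (g c : SpecialLinearGroup (Fin 2) F) :
    (g * c * g⁻¹) 0 0 + (g * c * g⁻¹) 1 1 = c 0 0 + c 1 1 := by
  obtain ⟨o1, o2, o3, o4⟩ := SL2.inv_entries g
  simp only [SL2.mul_00, SL2.mul_01, SL2.mul_10, SL2.mul_11, o1, o2, o3, o4]
  linear_combination (c 0 0 + c 1 1) * SL2.det_eq g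

/-- An element commuting with `c` and having the same trace is `c` or `c⁻¹`: commuting forces the
off-diagonal entries to agree, and both diagonals consist of the roots of one quadratic. -/
theorem SL2.conj_eq (h2 : (2 : F) = 0) (c x : SpecialLinearGroup (Fin 2) F) (hc : c * c ≠ 1)
    (htr : x 0 0 + x 1 1 = c 0 0 + c 1 1) (hx : x * c = c * x) : x = c ∨ x = c⁻¹ := by
  rw [Ne, SL2.mul_self_eq_one_iff h2] at hc
  obtain ⟨i1, i2, i3, i4⟩ := SL2.inv_entries c
  rw [SL2.commute_iff] at hx
  rw [SL2.ext_iff', SL2.ext_iff', i1, i2, i3, i4]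
  have hc' := sub_ne_zero.2 hc
  obtain ⟨-, e1, e2⟩ := hx
  have hsub : x 0 0 - x 1 1 = c 0 0 - c 1 1 := by
    linear_combination htr + (c 1 1 - x 1 1) * h2
  have e01 : x 0 1 = c 0 1 := by
    rw [hsub] at e1; exact mul_right_cancel₀ hc' e1
  have e10 : x 1 0 = c 1 0 := by
    rw [hsub] at e2; exact mul_right_cancel₀ hc' e2
  have hdx := SL2.det_eq x
  have hdc := SL2.det_eq c
  have hprod : (x 0 0 - c 0 0) * (x 0 0 - c 1 1) = 0 := by
    rw [e01, e10] at hdx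
    linear_combination x 0 0 * htr - hdx + hdc
  rcases mul_eq_zero.1 hprod with h | h
  · left
    exact ⟨by linear_combination h, e01, e10, by linear_combination htr - h⟩
  · right
    exact ⟨by linear_combination h, by linear_combination e01 + c 0 1 * h2,
      by linear_combination e10 + c 1 0 * h2, by linear_combination htr - h⟩

theorem SL2.involution_centralizer (h2 : (2 : F) = 0) (c t : SpecialLinearGroup (Fin 2) F)
    (ht : t ≠ 1) (ht2 : t * t = 1) (htc : t * c = c * t) : c * c = 1 := by
  rw [SL2.mul_self_eq_one_iff h2] at ht2 ⊢
  obtain ⟨-, h3, h4⟩ := (SL2.commute_iff _ _).1 htc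
  rw [ht2, sub_self, mul_zero] at h3 h4
  by_contra hne
  have hne' := sub_ne_zero.2 hne
  have h01 : t 0 1 = 0 := by simpa [hne'] using h3
  have h10 : t 1 0 = 0 := by simpa [hne'] using h4
  apply ht
  have hd := SL2.det_eq t
  rw [h01, ht2] at hd
  have h11 : t 1 1 = 1 := by
    have : (t 1 1 - 1) * (t 1 1 - 1) = 0 := by linear_combination hd + (1 - t 1 1) * h2
    simpa [sub_eq_zero] using this
  rw [SL2.ext_iff']
  obtain ⟨o1, o2, o3, o4⟩ := SL2.one_entries (F := F)
  rw [o1, o2, o3, o4]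
  exact ⟨ht2.trans h11, h01, h10, h11⟩

/-- The difference of the diagonal entries takes at most `q` values on the centralizer of `c`, and
each fibre has at most two elements, since the upper left entry solves a monic quadratic. -/
theorem SL2.card_centralizer_le [Fintype F] (h2 : (2 : F) = 0)
    (c : SpecialLinearGroup (Fin 2) F) (hc : c * c ≠ 1) :
    Nat.card {g : SpecialLinearGroup (Fin 2) F // g * c = c * g} ≤ 2 * Fintype.card F := by
  classical
  rw [Ne, SL2.mul_self_eq_one_iff h2] at hc
  have hc' := sub_ne_zero.2 hc
  rw [Nat.card_eq_fintype_card, ← Finset.card_univ, ← Finset.card_univ (α := F)]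
  refine Finset.card_le_mul_card_image_of_maps_to
    (f := fun g : {g : SpecialLinearGroup (Fin 2) F // g * c = c * g} => g.1 0 0 - g.1 1 1)
    (fun _ _ => Finset.mem_univ _) 2 fun δ _ => ?_
  rcases Finset.eq_empty_or_nonempty (Finset.univ.filter
    fun g : {g : SpecialLinearGroup (Fin 2) F // g * c = c * g} => g.1 0 0 - g.1 1 1 = δ)
    with he | ⟨g₀, hg₀⟩
  · rw [he]; simp
  rw [Finset.mem_filter] at hg₀
  -- within a fibre the off-diagonal entries are determined by `δ`
  have hoff : ∀ g : {g : SpecialLinearGroup (Fin 2) F // g * c = c * g},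
      g.1 0 0 - g.1 1 1 = δ → g.1 0 1 = c 0 1 * δ / (c 0 0 - c 1 1) ∧
        g.1 1 0 = c 1 0 * δ / (c 0 0 - c 1 1) := by
    intro g hg
    obtain ⟨-, h3, h4⟩ := (SL2.commute_iff _ _).1 g.2
    rw [hg] at h3 h4
    exact ⟨by rw [eq_div_iff hc', h3], by rw [eq_div_iff hc', h4]⟩
  refine le_trans (Finset.card_le_card_of_injOn (t := {g₀.1 0 0, δ - g₀.1 0 0})
    (fun g => g.1 0 0) ?_ ?_) Finset.card_le_two
  · intro g hg
    simp only [Finset.coe_filter, Finset.mem_univ, true_and, Set.mem_ofPred_eq] at hg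
    have d1 := SL2.det_eq g.1
    have d0 := SL2.det_eq g₀.1
    rw [(hoff g hg).1, (hoff g hg).2] at d1
    rw [(hoff g₀ hg₀.2).1, (hoff g₀ hg₀.2).2] at d0
    have : (g.1 0 0 - g₀.1 0 0) * (g.1 0 0 - (δ - g₀.1 0 0)) = 0 := by
      linear_combination d1 - d0 + g.1 0 0 * hg - g₀.1 0 0 * hg₀.2
    rcases mul_eq_zero.1 this with h | h
    · simp [sub_eq_zero.1 h]
    · simp [sub_eq_zero.1 h]
  · intro g hg g' hg' hgg
    simp only [Finset.coe_filter, Finset.mem_univ, true_and, Set.mem_ofPred_eq] at hg hg' hgg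
    apply Subtype.ext
    rw [SL2.ext_iff']
    refine ⟨hgg, ?_, ?_, ?_⟩
    · rw [(hoff g hg).1, (hoff g' hg').1]
    · rw [(hoff g hg).2, (hoff g' hg').2]
    · linear_combination hgg - hg + hg'

/-- The upper unitriangular matrix with off-diagonal entry `y`. -/
def SL2.transv (y : F) : SpecialLinearGroup (Fin 2) F :=
  ⟨!![1, y; 0, 1], by simp [Matrix.det_fin_two]⟩

theorem SL2.transv_entries (y : F) : SL2.transv y 0 0 = 1 ∧ SL2.transv y 0 1 = y ∧
    SL2.transv y 1 0 = 0 ∧ SL2.transv y 1 1 = 1 := by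
  simp [SL2.transv]

theorem SL2.card_centralizer_transv [Fintype F] (h2 : (2 : F) = 0) :
    Nat.card {g : SpecialLinearGroup (Fin 2) F // g * SL2.transv 1 = SL2.transv 1 * g}
      = Fintype.card F := by
  classical
  rw [← Nat.card_eq_fintype_card]
  have hmem : ∀ y : F, SL2.transv y * SL2.transv 1 = SL2.transv 1 * SL2.transv y := by
    intro y
    obtain ⟨a1, a2, a3, a4⟩ := SL2.transv_entries y
    obtain ⟨b1, b2, b3, b4⟩ := SL2.transv_entries (1 : F)
    rw [SL2.commute_iff, a1, a2, a3, a4, b1, b2, b3, b4]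
    simp
  refine (Nat.card_congr (Equiv.ofBijective (fun y : F => ⟨SL2.transv y, hmem y⟩) ⟨?_, ?_⟩)).symm
  · intro y y' h
    have := congrArg (fun g => g.1 0 1) h
    simpa [SL2.transv] using this
  · rintro ⟨g, hg⟩
    refine ⟨g 0 1, Subtype.ext ?_⟩
    obtain ⟨a1, a2, a3, a4⟩ := SL2.transv_entries (g 0 1)
    obtain ⟨b1, b2, b3, b4⟩ := SL2.transv_entries (1 : F)
    rw [SL2.commute_iff, b1, b2, b3, b4] at hg
    obtain ⟨e1, e2, -⟩ := hg
    have hd := SL2.det_eq g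
    have h10 : g 1 0 = 0 := by linear_combination - e1
    have h01 : g 0 0 = g 1 1 := by linear_combination - e2
    rw [h10, h01] at hd
    have h11 : g 1 1 = 1 := by
      have : (g 1 1 - 1) * (g 1 1 - 1) = 0 := by linear_combination hd + (1 - g 1 1) * h2
      simpa [sub_eq_zero] using this
    change SL2.transv (g 0 1) = g
    rw [SL2.ext_iff', a1, a2, a3, a4]
    exact ⟨by rw [h01, h11], rfl, h10.symm, h11.symm⟩

/-- In characteristic two every involution is conjugate to the standard transvection. -/
theorem SL2.exists_conj_transv [Finite F] (h2 : (2 : F) = 0)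
    (t : SpecialLinearGroup (Fin 2) F) (ht : t ≠ 1) (ht2 : t * t = 1) :
    ∃ g, g * SL2.transv 1 * g⁻¹ = t := by
  have : CharP F 2 := CharTwo.of_one_ne_zero_of_two_eq_zero one_ne_zero h2
  have hsq : ∀ x : F, x ≠ 0 → ∃ y, x * (y * y) = 1 := by
    intro x hx
    obtain ⟨y, hy⟩ := surjective_frobenius F 2 x⁻¹
    refine ⟨y, ?_⟩
    rw [frobenius_def, pow_two] at hy
    rw [hy, mul_inv_cancel₀ hx]
  rw [SL2.mul_self_eq_one_iff h2] at ht2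
  have hd := SL2.det_eq t
  obtain ⟨b1, b2, b3, b4⟩ := SL2.transv_entries (1 : F)
  -- The columns of `g` are `(t + 1) v` and `v`, with `v` a multiple of a standard basis vector;
  -- the determinant of `g` is `t₁₀ v₀² + t₀₁ v₁²`.
  suffices h : ∃ v₀ v₁ : F, t 1 0 * (v₀ * v₀) + t 0 1 * (v₁ * v₁) = 1 by
    obtain ⟨x, y, hxy⟩ := h
    obtain ⟨g, g1, g2, g3, g4⟩ := SL2.exists_of_det ((t 0 0 + 1) * x + t 0 1 * y) x
      (t 1 0 * x + (t 0 0 + 1) * y) y (by linear_combination hxy - t 1 0 * x * x * h2)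
    refine ⟨g, ?_⟩
    · rw [mul_inv_eq_iff_eq_mul, SL2.ext_iff']
      simp only [SL2.mul_00, SL2.mul_01, SL2.mul_10, SL2.mul_11, b1, b2, b3, b4, g1, g2, g3, g4]
      rw [← ht2] at hd ⊢
      refine ⟨?_, ?_, ?_, ?_⟩
      · linear_combination -x * hd - t 0 0 * t 0 1 * y * h2 - t 0 1 * t 1 0 * x * h2
      · linear_combination x * h2
      · linear_combination -y * hd - t 0 0 * t 1 0 * x * h2 - t 0 1 * t 1 0 * y * h2
      · linear_combination y * h2
  by_cases h10 : t 1 0 = 0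
  · by_cases h01 : t 0 1 = 0
    · exfalso
      apply ht
      rw [h01, ht2] at hd
      have h11 : t 1 1 = 1 := by
        have : (t 1 1 - 1) * (t 1 1 - 1) = 0 := by linear_combination hd + (1 - t 1 1) * h2
        simpa [sub_eq_zero] using this
      rw [SL2.ext_iff']
      obtain ⟨o1, o2, o3, o4⟩ := SL2.one_entries (F := F)
      rw [o1, o2, o3, o4]
      exact ⟨ht2.trans h11, h01, h10, h11⟩
    · obtain ⟨y, hy⟩ := hsq _ h01
      exact ⟨0, y, by linear_combination hy⟩
  · obtain ⟨y, hy⟩ := hsq _ h10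
    exact ⟨y, 0, by linear_combination hy⟩

theorem SL2.card_conj [Fintype F] (h2 : (2 : F) = 0) (s t : SpecialLinearGroup (Fin 2) F)
    (hs : s ≠ 1) (hs2 : s * s = 1) (ht : t ≠ 1) (ht2 : t * t = 1) :
    Nat.card {g : SpecialLinearGroup (Fin 2) F // g * s * g⁻¹ = t} = Fintype.card F := by
  obtain ⟨a, rfl⟩ := SL2.exists_conj_transv h2 s hs hs2
  obtain ⟨b, rfl⟩ := SL2.exists_conj_transv h2 t ht ht2
  rw [← SL2.card_centralizer_transv h2]
  refine (Nat.card_congr (((Equiv.mulLeft b).trans (Equiv.mulRight a⁻¹)).subtypeEquiv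
    fun g => ?_)).symm
  simp only [Equiv.trans_apply, Equiv.coe_mulLeft, Equiv.coe_mulRight]
  have e1 : b * g * a⁻¹ * (a * transv 1 * a⁻¹) * (b * g * a⁻¹)⁻¹ =
      b * (g * transv 1 * g⁻¹) * b⁻¹ := by group
  rw [e1, mul_left_inj, mul_right_inj, mul_inv_eq_iff_eq_mul]

/-- The order of `SL(2, q)`, from that of `GL(2, q)` and the surjectivity of the determinant. -/
theorem SL2.card [Fintype F] : Nat.card (SpecialLinearGroup (Fin 2) F) =
    Fintype.card F * ((Fintype.card F - 1) * (Fintype.card F + 1)) := by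
  classical
  have h1 : Nat.card (SpecialLinearGroup (Fin 2) F) =
      Nat.card (GeneralLinearGroup.det : GL (Fin 2) F →* Fˣ).ker := by
    refine Nat.card_congr (Equiv.ofBijective (fun A => ⟨SpecialLinearGroup.toGL A, by
      rw [MonoidHom.mem_ker]; ext; simp⟩) ⟨?_, ?_⟩)
    · intro A B h
      exact SpecialLinearGroup.toGL_injective (Subtype.ext_iff.1 h)
    · rintro ⟨A, hA⟩
      have hA' : (A : Matrix (Fin 2) (Fin 2) F).det = 1 := by
        simpa using congrArg Units.val (MonoidHom.mem_ker.1 hA)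
      exact ⟨⟨A.1, hA'⟩, Subtype.ext (Units.ext rfl)⟩
  have h3 := Subgroup.card_eq_card_quotient_mul_card_subgroup
    (GeneralLinearGroup.det : GL (Fin 2) F →* Fˣ).ker
  rw [Nat.card_congr (QuotientGroup.quotientKerEquivOfSurjective _
    GeneralLinearGroup.det_surjective).toEquiv, Nat.card_units, ← h1, Matrix.card_GL_field,
    Fin.prod_univ_two, Nat.card_eq_fintype_card] at h3
  have hq : 1 < Fintype.card F := Fintype.one_lt_card
  generalize Nat.card (SpecialLinearGroup (Fin 2) F) = N at *
  generalize Fintype.card F = q at *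
  obtain ⟨k, rfl⟩ : ∃ k, q = k + 1 := ⟨q - 1, by omega⟩
  have hk : 0 < k := by omega
  simp only [Fin.val_zero, Fin.val_one, pow_zero, pow_one, Nat.add_sub_cancel] at h3 ⊢
  have e1 : (k + 1) ^ 2 - 1 = k * (k + 2) := by
    rw [Nat.sub_eq_iff_eq_add (by nlinarith)]; ring
  have e2 : (k + 1) ^ 2 - (k + 1) = k * (k + 1) := by
    rw [Nat.sub_eq_iff_eq_add (by nlinarith)]; ring
  rw [e1, e2] at h3
  refine Nat.eq_of_mul_eq_mul_left hk ?_
  rw [← h3]; ring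

theorem SL2.isSL2Like [Fintype F] (h2 : (2 : F) = 0) :
    IsSL2Like (Fintype.card F) (SpecialLinearGroup (Fin 2) F) where
  card_eq := SL2.card
  card_conj := SL2.card_conj h2
  card_centralizer_le := SL2.card_centralizer_le h2
  involution_centralizer := SL2.involution_centralizer h2
  conj_eq c g hc := SL2.conj_eq h2 c _ hc (SL2.trace_conj g c)

/-- In characteristic two the center of `SL(2, F)` is trivial, so `PSL(2, F) ≅ SL(2, F)`. -/
theorem PSL2.isSL2Like [Fintype F] (h2 : (2 : F) = 0) :
    IsSL2Like (Fintype.card F) (ProjectiveSpecialLinearGroup (Fin 2) F) := by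
  have hbot : Subgroup.center (SpecialLinearGroup (Fin 2) F) = ⊥ := by
    rw [eq_bot_iff]
    intro A hA
    obtain ⟨r, hr, hrA⟩ := Matrix.SpecialLinearGroup.mem_center_iff.1 hA
    have hr1 : r = 1 := by
      rw [Fintype.card_fin] at hr
      have : (r - 1) * (r - 1) = 0 := by linear_combination hr + (1 - r) * h2
      simpa [sub_eq_zero] using this
    rw [Subgroup.mem_bot]
    apply Subtype.ext
    rw [← hrA, hr1]
    simp
  exact (SL2.isSL2Like h2).congr
    (QuotientGroup.quotientBot.symm.trans (QuotientGroup.quotientMulEquivOfEq hbot.symm))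

end SL2

/-! ### Dihedral subgroups and their cosets -/

section Dihedral

variable {G : Type*} [Group G] {q n : ℕ} {H : Subgroup G}

open DihedralGroup

theorem zmod_double_eq_zero (hn : Odd n) (i : ZMod n) (h : i + i = 0) : i = 0 := by
  have hu : IsUnit ((2 : ℕ) : ZMod n) := by
    rw [ZMod.isUnit_iff_coprime]; exact hn.coprime_two_left
  rw [← two_mul] at h
  exact (hu.mul_right_eq_zero).1 (by exact_mod_cast h)

theorem rotation_mul_self (hn : Odd n) (φ : H ≃* DihedralGroup n) (i : ZMod n)
    (h : (φ.symm (r i) : G) * φ.symm (r i) = 1) : i = 0 := by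
  apply zmod_double_eq_zero hn
  rw [← Subgroup.coe_mul, ← map_mul, r_mul_r, OneMemClass.coe_eq_one,
    EmbeddingLike.map_eq_one_iff, one_def] at h
  exact r.inj h

theorem reflection_mul_self (φ : H ≃* DihedralGroup n) (i : ZMod n) :
    (φ.symm (sr i) : G) * φ.symm (sr i) = 1 := by
  rw [← Subgroup.coe_mul, ← map_mul, sr_mul_self]; simp

theorem reflection_ne_one (φ : H ≃* DihedralGroup n) (i : ZMod n) :
    (φ.symm (sr i) : G) ≠ 1 := by
  rw [Ne, OneMemClass.coe_eq_one, EmbeddingLike.map_eq_one_iff, one_def]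
  exact nofun

theorem mem_cases (φ : H ≃* DihedralGroup n) {x : G} (hx : x ∈ H) :
    (∃ i, x = φ.symm (r i)) ∨ ∃ i, x = φ.symm (sr i) := by
  rcases h : φ ⟨x, hx⟩ with i | i
  · left; exact ⟨i, by rw [← h]; simp⟩
  · right; exact ⟨i, by rw [← h]; simp⟩

/-- The centralizer of a nontrivial rotation is the rotation subgroup `C`: its order is a multiple of
`n = |C|`, is at most `2 * q < 3 * n`, and is odd since no involution commutes with the rotation. -/
theorem centralizer_rotation [Finite G] (hG : IsSL2Like q G) (hn : Odd n) (hqn : 2 * q < 3 * n)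
    (φ : H ≃* DihedralGroup n) {i : ZMod n} (hi : i ≠ 0) {g : G}
    (hg : g * (φ.symm (r i) : G) = φ.symm (r i) * g) : g ∈ H := by
  set c : G := ((φ.symm (r i) : H) : G) with hc
  have hcc : c * c ≠ 1 := fun h => hi (rotation_mul_self hn φ i h)
  set ρ : H := φ.symm (r 1) with hρ
  have hcard : Nat.card (Subgroup.zpowers (ρ : G)) = n := by
    rw [Nat.card_zpowers, Subgroup.orderOf_coe, hρ, MulEquiv.orderOf_eq, orderOf_r_one]
  have hle : Subgroup.zpowers (ρ : G) ≤ Subgroup.centralizer {c} := by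
    rw [Subgroup.zpowers_le, Subgroup.mem_centralizer_singleton_iff, hc, hρ, ← Subgroup.coe_mul,
      ← Subgroup.coe_mul, ← map_mul, ← map_mul, r_mul_r, r_mul_r, add_comm]
  have hZ : Nat.card (Subgroup.centralizer {c}) ≤ 2 * q := by
    refine le_trans (le_of_eq (Nat.card_congr (Equiv.subtypeEquivRight fun x => ?_)))
      (hG.card_centralizer_le c hcc)
    rw [Subgroup.mem_centralizer_singleton_iff]
  obtain ⟨k, hk⟩ := Subgroup.card_dvd_of_le hle
  rw [hcard] at hk
  have hpos : 0 < Nat.card (Subgroup.centralizer {c}) := Nat.card_pos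
  have hk3 : k < 3 := by
    by_contra h
    have : n * 3 ≤ n * k := Nat.mul_le_mul_left _ (by omega)
    omega
  have hk2 : k ≠ 2 := by
    rintro rfl
    obtain ⟨t, ht⟩ := exists_prime_orderOf_dvd_card' (G := Subgroup.centralizer {c}) 2 ⟨n, by omega⟩
    have ht1 : (t : G) ≠ 1 := by
      intro h
      rw [OneMemClass.coe_eq_one] at h
      rw [h, orderOf_one] at ht; omega
    have ht2 : (t : G) * t = 1 := by
      rw [← Subgroup.coe_mul, ← pow_two, ← ht, pow_orderOf_eq_one, Subgroup.coe_one]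
    exact hcc (hG.involution_centralizer c t ht1 ht2
      (Subgroup.mem_centralizer_singleton_iff.1 t.2))
  have hk1 : k = 1 := by
    rcases k with _ | _ | _ | k <;> omega
  have heq := Subgroup.eq_of_le_of_card_ge hle (by rw [hcard, hk, hk1, mul_one])
  have : g ∈ Subgroup.zpowers (ρ : G) := by
    rw [heq, Subgroup.mem_centralizer_singleton_iff]; exact hg
  exact (Subgroup.zpowers_le.2 ρ.2) this

/-- For `g ∉ H`, every element of `H ∩ gHg⁻¹` squares to `1`. Otherwise two nontrivial rotations
`x` and `y` satisfy `x = gyg⁻¹`; they commute, so `x = y` or `x = y⁻¹`, and `g` lies in `H` because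
the centralizer of `y` does and some reflection inverts `y`. -/
theorem mul_self_of_conj [Finite G] (hG : IsSL2Like q G) (hn : Odd n) (hqn : 2 * q < 3 * n)
    (φ : H ≃* DihedralGroup n) {g x y : G} (hg : g ∉ H) (hx : x ∈ H) (hy : y ∈ H)
    (hxy : g * y * g⁻¹ = x) : x * x = 1 := by
  by_contra hxx
  have hyy : y * y ≠ 1 := by
    intro h
    apply hxx
    rw [← hxy]
    calc g * y * g⁻¹ * (g * y * g⁻¹) = g * (y * y) * g⁻¹ := by group
      _ = 1 := by rw [h]; group
  rcases mem_cases φ hx with ⟨i, hi⟩ | ⟨i, hi⟩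
  swap
  · exact hxx (by rw [hi]; exact reflection_mul_self φ i)
  rcases mem_cases φ hy with ⟨j, hj⟩ | ⟨j, hj⟩
  swap
  · exact hyy (by rw [hj]; exact reflection_mul_self φ j)
  have hj0 : j ≠ 0 := by
    rintro rfl
    apply hyy
    rw [hj, r_zero]; simp
  have hcomm : x * y = y * x := by
    rw [hi, hj, ← Subgroup.coe_mul, ← Subgroup.coe_mul, ← map_mul, ← map_mul, r_mul_r, r_mul_r,
      add_comm]
  rcases hG.conj_eq y g hyy (by rw [hxy, hcomm]) with h | h
  · exact hg (centralizer_rotation hG hn hqn φ hj0 (by rw [← hj]; exact mul_inv_eq_iff_eq_mul.1 h))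
  · -- a reflection `s` also inverts `y`, so `s * g` centralizes `y`
    set s : H := φ.symm (sr 0) with hs
    have hsy : (s : G) * y⁻¹ = y * s := by
      rw [hj, hs, ← Subgroup.coe_inv, ← Subgroup.coe_mul, ← Subgroup.coe_mul, ← map_inv, ← map_mul,
        ← map_mul, inv_r, sr_mul_r, r_mul_sr, zero_add, zero_sub]
    have hsg : (s : G) * g ∈ H := by
      refine centralizer_rotation hG hn hqn φ hj0 ?_
      rw [← hj, mul_assoc, mul_inv_eq_iff_eq_mul.1 h, ← mul_assoc, hsy, mul_assoc]
    exact hg ((Subgroup.mul_mem_cancel_left H s.2).1 hsg)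

theorem smul_mk_eq_iff (h : H) (g : G) :
    h • (QuotientGroup.mk g : G ⧸ H) = QuotientGroup.mk g ↔ g⁻¹ * h * g ∈ H := by
  change (QuotientGroup.mk ((h : G) * g) : G ⧸ H) = QuotientGroup.mk g ↔ _
  rw [eq_comm, QuotientGroup.eq, mul_assoc]

/-- The stabilizer in `H` of a point other than the base point contains no nontrivial rotation, hence
at most one reflection; the orbit has length `n` or `2 * n` accordingly. -/
theorem orbit_cases [Finite G] (hG : IsSL2Like q G) (hn : Odd n) (hqn : 2 * q < 3 * n)
    (φ : H ≃* DihedralGroup n) (x : G ⧸ H) (hx : x ≠ QuotientGroup.mk 1) :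
    (Nat.card (MulAction.orbit H x) = n ∧
      Nat.card {i : ZMod n // φ.symm (sr i) • x = x} = 1) ∨
    (Nat.card (MulAction.orbit H x) = 2 * n ∧
      Nat.card {i : ZMod n // φ.symm (sr i) • x = x} = 0) := by
  obtain ⟨g, rfl⟩ := QuotientGroup.mk_surjective x
  have hg : g ∉ H := by
    intro h
    apply hx
    rw [eq_comm, QuotientGroup.eq]; simpa using h
  set K := MulAction.stabilizer H (QuotientGroup.mk g : G ⧸ H) with hK
  have hsq : ∀ h ∈ K, h * h = 1 := by
    intro h hh
    rw [hK, MulAction.mem_stabilizer_iff, smul_mk_eq_iff] at hh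
    have := mul_self_of_conj hG hn hqn φ hg h.2 hh (by group)
    exact_mod_cast this
  have hrot : ∀ i : ZMod n, φ.symm (r i) ∈ K → i = 0 := fun i hi =>
    rotation_mul_self hn φ i (by exact_mod_cast hsq _ hi)
  have horb : Nat.card (MulAction.orbit H (QuotientGroup.mk g : G ⧸ H)) * Nat.card K = 2 * n := by
    have h1 := MulAction.index_stabilizer H (QuotientGroup.mk g : G ⧸ H)
    rw [← Nat.card_coe_set_eq] at h1
    rw [← h1, Subgroup.index_mul_card, Nat.card_congr φ.toEquiv, DihedralGroup.nat_card]
  by_cases hI : ∃ i, φ.symm (sr i) ∈ K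
  · left
    obtain ⟨i, hi⟩ := hI
    have huniq : ∀ j, φ.symm (sr j) ∈ K → j = i := by
      intro j hj
      have := K.mul_mem hi hj
      rw [← map_mul, sr_mul_sr] at this
      exact sub_eq_zero.1 (hrot _ this)
    have hKz : K = Subgroup.zpowers (φ.symm (sr i)) := by
      refine le_antisymm (fun h hh => ?_) (by rwa [Subgroup.zpowers_le])
      rcases e : φ h with j | j
      · have e' : h = φ.symm (r j) := by rw [← e]; simp
        rw [e'] at hh
        rw [e', hrot j hh, r_zero, map_one]
        exact Subgroup.one_mem _
      · have e' : h = φ.symm (sr j) := by rw [← e]; simp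
        rw [e'] at hh
        rw [e', huniq j hh]
        exact Subgroup.mem_zpowers _
    have hK2 : Nat.card K = 2 := by
      rw [hKz, Nat.card_zpowers, MulEquiv.orderOf_eq, orderOf_sr]
    refine ⟨by rw [hK2] at horb; omega, ?_⟩
    rw [Nat.card_eq_one_iff_unique]
    exact ⟨⟨fun a b => Subtype.ext ((huniq _ a.2).trans (huniq _ b.2).symm)⟩, ⟨⟨i, hi⟩⟩⟩
  · right
    push Not at hI
    have hKb : K = ⊥ := by
      rw [eq_bot_iff]
      intro h hh
      rcases e : φ h with j | j
      · have e' : h = φ.symm (r j) := by rw [← e]; simp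
        rw [e'] at hh
        rw [e', hrot j hh, r_zero, map_one]
        exact Subgroup.one_mem _
      · have e' : h = φ.symm (sr j) := by rw [← e]; simp
        rw [e'] at hh
        exact absurd hh (hI j)
    refine ⟨by rw [hKb, Subgroup.card_bot] at horb; omega, ?_⟩
    have : IsEmpty {i : ZMod n // φ.symm (sr i) • (QuotientGroup.mk g : G ⧸ H) =
        QuotientGroup.mk g} := ⟨fun i => hI i.1 i.2⟩
    exact Nat.card_of_isEmpty

/-- A reflection fixes `q / 2` points: the `g : G` conjugating some element of `H` to it number
`n * q`, and they fill whole cosets of `H`. -/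
theorem card_fixed_reflection [Finite G] (hG : IsSL2Like q G) (hn : Odd n)
    (φ : H ≃* DihedralGroup n) (i : ZMod n) :
    2 * Nat.card {x : G ⧸ H // φ.symm (sr i) • x = x} = q := by
  have hn0 : n ≠ 0 := by rintro rfl; simp at hn
  have : NeZero n := ⟨hn0⟩
  have h1 := Nat.card_congr (QuotientGroup.preimageMkEquivSubgroupProdSet H
    {x : G ⧸ H | φ.symm (sr i) • x = x})
  rw [Nat.card_prod, Nat.card_congr φ.toEquiv, DihedralGroup.nat_card] at h1
  have h2 : Nat.card (Σ j : ZMod n, {g : G // g * (φ.symm (sr j) : G) * g⁻¹ = φ.symm (sr i)}) =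
      Nat.card (QuotientGroup.mk ⁻¹' {x : G ⧸ H | φ.symm (sr i) • x = x} : Set G) := by
    have hmem : ∀ p : (Σ j : ZMod n, {g : G // g * (φ.symm (sr j) : G) * g⁻¹ = φ.symm (sr i)}),
        φ.symm (sr i) • QuotientGroup.mk p.2.1 = (QuotientGroup.mk p.2.1 : G ⧸ H) := by
      rintro ⟨j, g, hg⟩
      rw [smul_mk_eq_iff]
      change g⁻¹ * _ * g ∈ H
      rw [← hg]
      simp [mul_assoc]
    refine Nat.card_congr (Equiv.ofBijective (fun p => ⟨p.2.1, hmem p⟩) ⟨?_, ?_⟩)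
    · rintro ⟨j, g, hg⟩ ⟨j', g', hg'⟩ h
      obtain rfl : g = g' := congrArg Subtype.val h
      have : j = j' := by
        have e := hg.trans hg'.symm
        rw [mul_left_inj, mul_right_inj, SetLike.coe_eq_coe, φ.symm.injective.eq_iff] at e
        exact sr.inj e
      subst this
      rfl
    · rintro ⟨g, hg⟩
      have hg' : φ.symm (sr i) • QuotientGroup.mk g = (QuotientGroup.mk g : G ⧸ H) := hg
      rw [smul_mk_eq_iff] at hg'
      have hsq : (g⁻¹ * (φ.symm (sr i) : G) * g) * (g⁻¹ * (φ.symm (sr i) : G) * g) = 1 := by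
        calc _ = g⁻¹ * ((φ.symm (sr i) : G) * (φ.symm (sr i) : G)) * g := by group
          _ = 1 := by rw [reflection_mul_self]; group
      rcases mem_cases φ hg' with ⟨j, hj⟩ | ⟨j, hj⟩
      · exfalso
        rw [hj] at hsq
        rw [rotation_mul_self hn φ j hsq, r_zero, map_one, Subgroup.coe_one] at hj
        apply reflection_ne_one φ i
        calc (φ.symm (sr i) : G) = g * (g⁻¹ * (φ.symm (sr i) : G) * g) * g⁻¹ := by group
          _ = 1 := by rw [hj]; group
      · exact ⟨⟨j, g, by rw [← hj]; group⟩, rfl⟩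
  rw [Nat.card_sigma, Finset.sum_congr rfl fun j _ => hG.card_conj _ _ (reflection_ne_one φ j)
    (reflection_mul_self φ j) (reflection_ne_one φ i) (reflection_mul_self φ i), Finset.sum_const,
    Finset.card_univ, ZMod.card, smul_eq_mul] at h2
  rw [← h2] at h1
  refine Nat.eq_of_mul_eq_mul_left (Nat.pos_of_ne_zero hn0) ?_
  rw [h1, mul_left_comm, mul_assoc]
  rfl

/-- The points lying on orbits of length `m`, counted orbit by orbit. -/
theorem card_orbit_eq {X : Type*} [Finite X] [MulAction G X] (m : ℕ) :
    Nat.card {x : X // Nat.card (MulAction.orbit G x) = m} =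
      Nat.card {ω : MulAction.orbitRel.Quotient G X // Nat.card ω.orbit = m} * m := by
  classical
  have : Fintype {ω : MulAction.orbitRel.Quotient G X // Nat.card ω.orbit = m} := Fintype.ofFinite _
  let f : {x : X // Nat.card (MulAction.orbit G x) = m} →
      {ω : MulAction.orbitRel.Quotient G X // Nat.card ω.orbit = m} :=
    fun x => ⟨Quotient.mk'' x.1, x.2⟩
  rw [← Nat.card_congr (Equiv.sigmaFiberEquiv f), Nat.card_sigma]
  have hf : ∀ ω, Nat.card {x // f x = ω} = m := by
    intro ω
    have hmem : ∀ x : {x // f x = ω}, x.1.1 ∈ ω.1.orbit := fun x => by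
      rw [MulAction.orbitRel.Quotient.mem_orbit]
      exact congrArg Subtype.val x.2
    refine Eq.trans (Nat.card_congr (Equiv.ofBijective (fun x => ⟨x.1.1, hmem x⟩) ⟨?_, ?_⟩)) ω.2
    · intro x y h
      have h' := congrArg Subtype.val h
      exact Subtype.ext (Subtype.ext h')
    · rintro ⟨x, hx⟩
      rw [MulAction.orbitRel.Quotient.mem_orbit] at hx
      have hx' : Nat.card (MulAction.orbit G x) = m := by
        rw [← ω.2, ← hx]; rfl
      exact ⟨⟨⟨x, hx'⟩, Subtype.ext hx⟩, rfl⟩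
  rw [Finset.sum_congr rfl fun ω _ => hf ω, Finset.sum_const, Finset.card_univ, smul_eq_mul,
    Nat.card_eq_fintype_card]

theorem orbit_mk_one (x : G ⧸ H) (hx : x = QuotientGroup.mk 1) (h : H) : h • x = x := by
  rw [hx, smul_mk_eq_iff]; simp

/-- The subdegrees on the cosets of a dihedral subgroup of order `2 * n`. The last conjunct counts
`|G|` as `|G ⧸ H| * |H|` and determines the multiplicity of `2 * n` once `n` is known. -/
theorem subdegrees [Finite G] (hG : IsSL2Like q G) (hq : 4 ≤ q) (hn : Odd n) (hqn : 2 * q < 3 * n)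
    (φ : H ≃* DihedralGroup n) :
    (∀ ω : MulAction.orbitRel.Quotient H (G ⧸ H),
      Nat.card ω.orbit = 1 ∨ Nat.card ω.orbit = n ∨ Nat.card ω.orbit = 2 * n) ∧
    Nat.card {ω : MulAction.orbitRel.Quotient H (G ⧸ H) // Nat.card ω.orbit = 1} = 1 ∧
    Nat.card {ω : MulAction.orbitRel.Quotient H (G ⧸ H) // Nat.card ω.orbit = n} = q / 2 - 1 ∧
    (1 + (q / 2 - 1) * n +
      Nat.card {ω : MulAction.orbitRel.Quotient H (G ⧸ H) // Nat.card ω.orbit = 2 * n} * (2 * n)) *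
        (2 * n) = q * ((q - 1) * (q + 1)) := by
  classical
  have hn3 : 3 ≤ n := by omega
  have : NeZero n := ⟨by omega⟩
  have : Fintype (G ⧸ H) := Fintype.ofFinite _
  have hone : ∀ x : G ⧸ H, x = QuotientGroup.mk 1 → Nat.card (MulAction.orbit H x) = 1 := by
    intro x hx
    have : MulAction.orbit H x = {x} := by
      ext y
      simp only [MulAction.mem_orbit_iff, orbit_mk_one x hx, Set.mem_singleton_iff]
      exact ⟨fun ⟨_, h⟩ => h.symm, fun h => ⟨1, h.symm⟩⟩
    rw [this]; simp
  have hcases := orbit_cases hG hn hqn φ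
  have hiff : ∀ x : G ⧸ H, Nat.card (MulAction.orbit H x) = 1 ↔ x = QuotientGroup.mk 1 := by
    intro x
    refine ⟨fun h => ?_, hone x⟩
    by_contra hx
    rcases hcases x hx with h' | h' <;> omega
  have c1 : Nat.card {x : G ⧸ H // Nat.card (MulAction.orbit H x) = 1} = 1 := by
    rw [Nat.card_congr (Equiv.subtypeEquivRight hiff)]; simp
  have E1 := card_orbit_eq (G := H) (X := G ⧸ H) 1
  have En := card_orbit_eq (G := H) (X := G ⧸ H) n
  have E2n := card_orbit_eq (G := H) (X := G ⧸ H) (2 * n)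
  -- double count of the pairs (reflection, fixed point)
  have hsum : ∑ x : G ⧸ H, Nat.card {i : ZMod n // φ.symm (sr i) • x = x} = n * (q / 2) := by
    rw [← Nat.card_sigma, Nat.card_congr (show
      (Σ x : G ⧸ H, {i : ZMod n // φ.symm (sr i) • x = x}) ≃
        (Σ i : ZMod n, {x : G ⧸ H // φ.symm (sr i) • x = x}) from
        ⟨fun p => ⟨p.2.1, p.1, p.2.2⟩, fun p => ⟨p.2.1, p.1, p.2.2⟩, fun _ => rfl, fun _ => rfl⟩),
      Nat.card_sigma, Finset.sum_congr rfl fun i _ => (show _ = q / 2 by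
        have := card_fixed_reflection hG hn φ i; omega)]
    simp
  have hpt : ∀ x : G ⧸ H, Nat.card {i : ZMod n // φ.symm (sr i) • x = x} =
      (if Nat.card (MulAction.orbit H x) = 1 then n else 0) +
        (if Nat.card (MulAction.orbit H x) = n then 1 else 0) := by
    intro x
    by_cases hx : x = QuotientGroup.mk 1
    · rw [hone x hx, if_pos rfl, if_neg (by omega), add_zero]
      rw [Nat.card_congr (Equiv.subtypeUnivEquiv fun i => orbit_mk_one x hx _), Nat.card_zmod]
    · rcases hcases x hx with ⟨h1, h2⟩ | ⟨h1, h2⟩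
      · rw [h1, h2, if_neg (by omega), if_pos rfl]
      · rw [h1, h2, if_neg (by omega), if_neg (by omega)]
  have hpt' : ∀ x : G ⧸ H, 1 =
      (if Nat.card (MulAction.orbit H x) = 1 then 1 else 0) +
        (if Nat.card (MulAction.orbit H x) = n then 1 else 0) +
        (if Nat.card (MulAction.orbit H x) = 2 * n then 1 else 0) := by
    intro x
    by_cases hx : x = QuotientGroup.mk 1
    · rw [hone x hx, if_pos rfl, if_neg (by omega), if_neg (by omega)]
    · rcases hcases x hx with ⟨h1, h2⟩ | ⟨h1, h2⟩
      · rw [h1, if_neg (by omega), if_pos rfl, if_neg (by omega)]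
      · rw [h1, if_neg (by omega), if_neg (by omega), if_pos rfl]
  have hind : ∀ m k : ℕ, ∑ x : G ⧸ H, (if Nat.card (MulAction.orbit H x) = m then k else 0) =
      Nat.card {x : G ⧸ H // Nat.card (MulAction.orbit H x) = m} * k := by
    intro m k
    rw [← Finset.sum_filter, Finset.sum_const, smul_eq_mul, Nat.card_eq_fintype_card,
      Fintype.card_subtype]
  rw [Finset.sum_congr rfl fun x _ => hpt x, Finset.sum_add_distrib, hind, hind, c1, En] at hsum
  have hX : Nat.card (G ⧸ H) = 1 + Nat.card {x : G ⧸ H // Nat.card (MulAction.orbit H x) = n} +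
      Nat.card {x : G ⧸ H // Nat.card (MulAction.orbit H x) = 2 * n} := by
    rw [Nat.card_eq_fintype_card, ← Finset.card_univ, Finset.card_eq_sum_ones,
      Finset.sum_congr rfl fun x _ => hpt' x, Finset.sum_add_distrib, Finset.sum_add_distrib,
      hind, hind, hind, c1]
    simp
  have ha : Nat.card {ω : MulAction.orbitRel.Quotient H (G ⧸ H) // Nat.card ω.orbit = n} =
      q / 2 - 1 := by
    generalize Nat.card {ω : MulAction.orbitRel.Quotient H (G ⧸ H) // Nat.card ω.orbit = n} = a
      at hsum
    have : 1 + a = q / 2 := Nat.eq_of_mul_eq_mul_left (show 0 < n by omega)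
      (by rw [← hsum]; ring)
    omega
  refine ⟨?_, by omega, ha, ?_⟩
  · intro ω
    induction ω using Quotient.inductionOn' with
    | h x =>
      rw [MulAction.orbitRel.Quotient.orbit_mk]
      by_cases hx : x = QuotientGroup.mk 1
      · exact Or.inl (hone x hx)
      · rcases hcases x hx with h | h
        · exact Or.inr (Or.inl h.1)
        · exact Or.inr (Or.inr h.1)
  · rw [← ha, ← En, ← E2n, ← hX, ← hG.card_eq, Subgroup.card_eq_card_quotient_mul_card_subgroup H,
      Nat.card_congr φ.toEquiv, DihedralGroup.nat_card]

end Dihedral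

/-- Let `q ≥ 4` be a power of `2` and let `F` be the field with `q` elements.
In the transitive action of `PSL(2,q)` on the cosets of a dihedral subgroup `D_{2(q−1)}`
of order `2(q−1)`, the subdegrees (the sizes of the orbits of the point stabilizer) are `1`,
the value `q−1` occurring with multiplicity `q/2 − 1`, and `2(q−1)` occurring once.
In the transitive action of `PSL(2,q)` on the cosets of a dihedral subgroup `D_{2(q+1)}`
of order `2(q+1)`, the subdegrees are `1` and the value `q+1` occurring with
multiplicity `q/2 − 1`. -/
theorem stmt_7 (q f : ℕ) (hq : q = 2 ^ f) (hq4 : 4 ≤ q)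
    (F : Type) [Field F] [Fintype F] (hF : Fintype.card F = q) :
    -- Part 1: the dihedral subgroup `D_{2(q-1)}`
    (∀ H : Subgroup (ProjectiveSpecialLinearGroup (Fin 2) F),
      Nonempty (H ≃* DihedralGroup (q - 1)) →
      -- all subdegrees lie in `{1, q-1, 2(q-1)}` …
      (∀ ω : MulAction.orbitRel.Quotient H
          (ProjectiveSpecialLinearGroup (Fin 2) F ⧸ H),
        Nat.card ω.orbit ∈ ({1, q - 1, 2 * (q - 1)} : Set ℕ)) ∧
      -- … with the subdegree `1` occurring once (the fixed coset `H`),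
      Nat.card {ω : MulAction.orbitRel.Quotient H
          (ProjectiveSpecialLinearGroup (Fin 2) F ⧸ H) // Nat.card ω.orbit = 1} = 1 ∧
      -- the subdegree `q-1` occurring with multiplicity `q/2 - 1`,
      Nat.card {ω : MulAction.orbitRel.Quotient H
          (ProjectiveSpecialLinearGroup (Fin 2) F ⧸ H) // Nat.card ω.orbit = q - 1} =
        q / 2 - 1 ∧
      -- and the subdegree `2(q-1)` occurring once:
      Nat.card {ω : MulAction.orbitRel.Quotient H
          (ProjectiveSpecialLinearGroup (Fin 2) F ⧸ H) // Nat.card ω.orbit = 2 * (q - 1)} = 1)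
    ∧
    -- Part 2: the dihedral subgroup `D_{2(q+1)}`
    (∀ H : Subgroup (ProjectiveSpecialLinearGroup (Fin 2) F),
      Nonempty (H ≃* DihedralGroup (q + 1)) →
      -- all subdegrees lie in `{1, q+1}` …
      (∀ ω : MulAction.orbitRel.Quotient H
          (ProjectiveSpecialLinearGroup (Fin 2) F ⧸ H),
        Nat.card ω.orbit ∈ ({1, q + 1} : Set ℕ)) ∧
      -- … with the subdegree `1` occurring once,
      Nat.card {ω : MulAction.orbitRel.Quotient H
          (ProjectiveSpecialLinearGroup (Fin 2) F ⧸ H) // Nat.card ω.orbit = 1} = 1 ∧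
      -- and the subdegree `q+1` occurring with multiplicity `q/2 - 1`:
      Nat.card {ω : MulAction.orbitRel.Quotient H
          (ProjectiveSpecialLinearGroup (Fin 2) F ⧸ H) // Nat.card ω.orbit = q + 1} =
        q / 2 - 1) := by
  obtain ⟨m, hm⟩ : ∃ m, q = 2 * m := by
    have hf : f ≠ 0 := by rintro rfl; omega
    exact hq ▸ dvd_pow_self 2 hf
  have h2 : (2 : F) = 0 := by
    have h : ((Fintype.card F : ℕ) : F) = 0 := Nat.cast_card_eq_zero F
    rw [hF, hq, Nat.cast_pow, Nat.cast_ofNat] at h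
    exact eq_zero_of_pow_eq_zero h
  have hG : IsSL2Like q (ProjectiveSpecialLinearGroup (Fin 2) F) := hF ▸ PSL2.isSL2Like h2
  have : Finite (ProjectiveSpecialLinearGroup (Fin 2) F) :=
    inferInstanceAs (Finite (SpecialLinearGroup (Fin 2) F ⧸ _))
  refine ⟨fun H ⟨φ⟩ => ?_, fun H ⟨φ⟩ => ?_⟩
  · obtain ⟨hall, h1, hn, hcount⟩ := subdegrees hG hq4 ⟨m - 1, by omega⟩ (by omega) φ
    refine ⟨fun ω => by simpa using hall ω, h1, hn, ?_⟩
    generalize Nat.card {ω : MulAction.orbitRel.Quotient H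
      (ProjectiveSpecialLinearGroup (Fin 2) F ⧸ H) // Nat.card ω.orbit = 2 * (q - 1)} = b at hcount
    obtain ⟨k, rfl⟩ : ∃ k, m = k + 1 := ⟨m - 1, by omega⟩
    have e1 : q - 1 = 2 * k + 1 := by omega
    have e2 : q / 2 - 1 = k := by omega
    have e3 : q + 1 = 2 * k + 3 := by omega
    rw [e1, e2, e3, hm] at hcount
    have hk : 0 < (2 * k + 1) * (2 * k + 1) * 4 := by positivity
    -- `hcount` reads `4 * n ^ 2 * b = 4 * n ^ 2 * 1` after expansion
    refine Nat.eq_of_mul_eq_mul_left hk ?_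
    linarith
  · obtain ⟨hall, h1, hn, hcount⟩ := subdegrees hG hq4 ⟨m, by omega⟩ (by omega) φ
    have hb : Nat.card {ω : MulAction.orbitRel.Quotient H
        (ProjectiveSpecialLinearGroup (Fin 2) F ⧸ H) // Nat.card ω.orbit = 2 * (q + 1)} = 0 := by
      generalize Nat.card {ω : MulAction.orbitRel.Quotient H
        (ProjectiveSpecialLinearGroup (Fin 2) F ⧸ H) // Nat.card ω.orbit = 2 * (q + 1)} = b
        at hcount
      obtain ⟨k, rfl⟩ : ∃ k, m = k + 1 := ⟨m - 1, by omega⟩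
      have e1 : q - 1 = 2 * k + 1 := by omega
      have e2 : q / 2 - 1 = k := by omega
      have e3 : q + 1 = 2 * k + 3 := by omega
      rw [e1, e2, e3, hm] at hcount
      have hk : 0 < (2 * k + 3) * (2 * k + 3) * 4 := by positivity
      -- `hcount` reads `4 * n ^ 2 * b = 0` after expansion
      refine Nat.eq_of_mul_eq_mul_left hk ?_
      linarith
    have hempty := (Nat.card_eq_zero.1 hb).resolve_right (not_infinite_iff_finite.2 inferInstance)
    refine ⟨fun ω => ?_, h1, hn⟩
    rcases hall ω with h | h | h
    · simp [h]
    · simp [h]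
    · exact (hempty.false ⟨ω, h⟩).elim
end
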